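/- Under the Bessel semigroup evolution Ψ_t(r) := −log P_t^b(e^{-Ψ})(r) with Ψ convex, non-decreasing, superlinear, Ψ(0)=0, the Legendre transform satisfies the evolution equation ∂_t(LΨ_t)(r) = −1/(LΨ_t)''(r) + r² − (n−1)·r/(LΨ_t)'(r) for r > 0. -/

import Mathlib

open Set MeasureTheory Filter

/-- The Bessel semigroup `P_t^b`, the projection of the heat semigroup on `ℝⁿ`
onto radial functions: `P_t^b g (r) = (g̃ * g_t)(x)` for any `x` with `‖x‖ = r`. -/
noncomputable def besselSemigroup (n : ℕ) [NeZero n] (t : ℝ) (g : ℝ → ℝ) (r : ℝ) : ℝ :=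
  ∫ y : EuclideanSpace ℝ (Fin n),
    Real.exp (-‖EuclideanSpace.single (0 : Fin n) r - y‖ ^ 2 / (4 * t)) /
        (4 * Real.pi * t) ^ ((n : ℝ) / 2) * g ‖y‖

/-- The evolved potential `Ψ_t = −log P_t^b (e^{-Ψ})`. -/
noncomputable def evolvedPotential (n : ℕ) [NeZero n] (Ψ : ℝ → ℝ) (t r : ℝ) : ℝ :=
  - Real.log (besselSemigroup n t (fun s => Real.exp (-Ψ s)) r)

/-- The one-dimensional Legendre transform `LΨ_t(r) = sup_{s>0} (rs − Ψ_t(s))`. -/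
noncomputable def legendreEvolved (n : ℕ) [NeZero n] (Ψ : ℝ → ℝ) (t r : ℝ) : ℝ :=
  ⨆ s : Set.Ioi (0 : ℝ), (r * (s : ℝ) - evolvedPotential n Ψ t s)



open scoped Topology in
theorem legendre_abs (P G H Pt : ℝ → ℝ → ℝ)
    (hP : ∀ t > 0, ∀ s > 0, HasDerivAt (P t) (G t s) s)
    (hPs : ∀ t > 0, ∀ s > 0, ∃ D : ℝ × ℝ →L[ℝ] ℝ, D (1, 0) = Pt t s ∧
      HasStrictFDerivAt (fun p : ℝ × ℝ => P p.1 p.2) D (t, s))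
    (hG : ∀ t > 0, ∀ s > 0, HasDerivAt (G t) (H t s) s)
    (hGt : ∀ t > 0, ∀ s > 0, ContinuousAt (fun τ => G τ s) t)
    (hH : ∀ t > 0, ∀ s > 0, 0 < H t s)
    (hsur : ∀ t > 0, ∀ r > 0, ∃ s > 0, G t s = r)
    (L : ℝ → ℝ → ℝ) (hL : ∀ t r, L t r = ⨆ s : Set.Ioi (0 : ℝ), (r * (s : ℝ) - P t s)) :
    ∀ t > 0, ∀ r > 0, ∃ s > 0, G t s = r ∧ deriv (fun τ => L τ r) t = - Pt t s ∧
      deriv (L t) r = s ∧ deriv (deriv (L t)) r = (H t s)⁻¹ := by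
  have hmono : ∀ t > 0, StrictMonoOn (G t) (Ioi 0) := by
    intro t ht
    apply strictMonoOn_of_deriv_pos (convex_Ioi 0)
    · exact fun s hs => (hG t ht s hs).continuousAt.continuousWithinAt
    · intro s hs
      rw [interior_Ioi] at hs
      rw [(hG t ht s hs).deriv]; exact hH t ht s hs
  choose! S hS0 hSG using hsur
  -- tangent inequality
  have htan : ∀ t > 0, ∀ s > 0, ∀ s' > 0, P t s + G t s * (s' - s) ≤ P t s' := by
    intro t ht s hs s' hs'
    have hc : ConvexOn ℝ (Ioi 0) (P t) := by
      apply MonotoneOn.convexOn_of_deriv (convex_Ioi 0)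
      · exact fun s hs => (hP t ht s hs).continuousAt.continuousWithinAt
      · rw [interior_Ioi]
        exact fun s hs => (hP t ht s hs).differentiableAt.differentiableWithinAt
      · rw [interior_Ioi]
        intro x hx y hy hxy
        rw [(hP t ht x hx).deriv, (hP t ht y hy).deriv]
        exact (hmono t ht).monotoneOn hx hy hxy
    rcases lt_trichotomy s s' with h | h | h
    · have := hc.le_slope_of_hasDerivAt (x := s) (y := s') hs hs' h (hP t ht s hs)
      rw [slope_def_field, le_div_iff₀ (by linarith)] at this
      linarith
    · subst h; simp
    · have := hc.slope_le_of_hasDerivAt (x := s') (y := s) hs' hs h (hP t ht s hs)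
      rw [slope_def_field, div_le_iff₀ (by linarith)] at this
      linarith
  have hbd : ∀ t > 0, ∀ r > 0, ∀ s > 0, r * s - P t s ≤ r * S t r - P t (S t r) := by
    intro t ht r hr s hs
    have := htan t ht (S t r) (hS0 t ht r hr) s hs
    rw [hSG t ht r hr] at this
    linarith
  have hLS : ∀ t > 0, ∀ r > 0, L t r = r * S t r - P t (S t r) := by
    intro t ht r hr
    rw [hL]
    apply le_antisymm
    · have : Nonempty (Ioi (0:ℝ)) := ⟨⟨1, by norm_num⟩⟩
      exact ciSup_le fun s => hbd t ht r hr s s.2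
    · exact le_ciSup (f := fun s : Ioi (0:ℝ) => r * (s : ℝ) - P t s)
        ⟨_, by rintro _ ⟨s, rfl⟩; exact hbd t ht r hr s s.2⟩ ⟨S t r, hS0 t ht r hr⟩
  have hLle : ∀ t > 0, ∀ r > 0, ∀ s > 0, r * s - P t s ≤ L t r := by
    intro t ht r hr s hs
    rw [hLS t ht r hr]; exact hbd t ht r hr s hs
  -- continuity of S
  have hScr : ∀ t > 0, ∀ r > 0, ContinuousAt (S t) r := by
    intro t ht r hr
    have h0 := hS0 t ht r hr
    rw [ContinuousAt, tendsto_order]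
    constructor
    · intro a ha
      have hm : max a (S t r / 2) < S t r := max_lt ha (by linarith)
      have hm0 : 0 < max a (S t r / 2) := lt_max_of_lt_right (by linarith)
      have : G t (max a (S t r / 2)) < r := by
        have := hmono t ht hm0 h0 hm
        rwa [hSG t ht r hr] at this
      filter_upwards [eventually_gt_nhds this, eventually_gt_nhds hr] with r' hr' hr0
      rw [← hSG t ht r' hr0] at hr'
      exact lt_of_le_of_lt (le_max_left _ _)
        (((hmono t ht).lt_iff_lt hm0 (hS0 t ht r' hr0)).1 hr')
    · intro a ha
      have : r < G t a := by
        have := hmono t ht h0 (lt_trans h0 ha) ha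
        rwa [hSG t ht r hr] at this
      filter_upwards [eventually_lt_nhds this, eventually_gt_nhds hr] with r' hr' hr0
      rw [← hSG t ht r' hr0] at hr'
      exact ((hmono t ht).lt_iff_lt (hS0 t ht r' hr0) (lt_trans h0 ha)).1 hr'
  have hSct : ∀ t > 0, ∀ r > 0, ContinuousAt (fun τ => S τ r) t := by
    intro t ht r hr
    have h0 := hS0 t ht r hr
    rw [ContinuousAt, tendsto_order]
    constructor
    · intro a ha
      have hm : max a (S t r / 2) < S t r := max_lt ha (by linarith)
      have hm0 : 0 < max a (S t r / 2) := lt_max_of_lt_right (by linarith)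
      have : G t (max a (S t r / 2)) < r := by
        have := hmono t ht hm0 h0 hm
        rwa [hSG t ht r hr] at this
      filter_upwards [(hGt t ht _ hm0).eventually_lt_const this, eventually_gt_nhds ht] with τ hτ hτ0
      have hτ := hτ.trans_eq (hSG τ hτ0 r hr).symm
      exact lt_of_le_of_lt (le_max_left _ _)
        (((hmono τ hτ0).lt_iff_lt hm0 (hS0 τ hτ0 r hr)).1 hτ)
    · intro a ha
      have ha0 := lt_trans h0 ha
      have : r < G t a := by
        have := hmono t ht h0 ha0 ha
        rwa [hSG t ht r hr] at this
      filter_upwards [(hGt t ht _ ha0).eventually_const_lt this, eventually_gt_nhds ht] with τ hτ hτ0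
      rw [← hSG τ hτ0 r hr] at hτ
      exact ((hmono τ hτ0).lt_iff_lt (hS0 τ hτ0 r hr) ha0).1 hτ
  have hLr : ∀ t > 0, ∀ r > 0, HasDerivAt (L t) (S t r) r := by
    intro t ht r hr
    rw [hasDerivAt_iff_isLittleO, Asymptotics.isLittleO_iff]
    intro c hc
    have hcont := hScr t ht r hr
    rw [Metric.continuousAt_iff'] at hcont
    filter_upwards [hcont c hc, eventually_gt_nhds hr] with r' h1 hr'
    have e1 := hLle t ht r' hr' _ (hS0 t ht r hr)
    have e2 := hLle t ht r hr _ (hS0 t ht r' hr')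
    have e3 := hLS t ht r hr
    have e4 := hLS t ht r' hr'
    rw [smul_eq_mul, Real.norm_eq_abs, Real.norm_eq_abs]
    have lo : 0 ≤ L t r' - L t r - (r' - r) * S t r := by linarith
    have up : L t r' - L t r - (r' - r) * S t r ≤ (S t r' - S t r) * (r' - r) := by linarith
    rw [abs_of_nonneg lo]
    calc _ ≤ _ := up
      _ ≤ |(S t r' - S t r) * (r' - r)| := le_abs_self _
      _ = |S t r' - S t r| * |r' - r| := abs_mul _ _
      _ ≤ c * |r' - r| := by
        apply mul_le_mul_of_nonneg_right _ (abs_nonneg _)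
        rw [Real.dist_eq] at h1; exact h1.le
  have hLt : ∀ t > 0, ∀ r > 0, HasDerivAt (fun τ => L τ r) (- Pt t (S t r)) t := by
    intro t ht r hr
    obtain ⟨D, hD, hst⟩ := hPs t ht _ (hS0 t ht r hr)
    have hDm : ∀ x : ℝ, D (x, 0) = x * Pt t (S t r) := by
      intro x
      rw [← hD, ← smul_eq_mul, ← map_smul]; simp
    rw [hasStrictFDerivAt_iff_isLittleO] at hst
    rw [hasDerivAt_iff_isLittleO, Asymptotics.isLittleO_iff]
    intro c hc
    have hev := (Asymptotics.isLittleO_iff.1 hst) hc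
    have hS := hSct t ht r hr
    have T1 : Tendsto (fun τ : ℝ => (((τ, S τ r), (t, S τ r)) : (ℝ × ℝ) × (ℝ × ℝ))) (𝓝 t)
        (𝓝 ((t, S t r), (t, S t r))) :=
      (tendsto_id.prodMk_nhds hS).prodMk_nhds (tendsto_const_nhds.prodMk_nhds hS)
    have T2 : Tendsto (fun τ : ℝ => (((τ, S t r), (t, S t r)) : (ℝ × ℝ) × (ℝ × ℝ))) (𝓝 t)
        (𝓝 ((t, S t r), (t, S t r))) :=
      (tendsto_id.prodMk_nhds tendsto_const_nhds).prodMk_nhds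
        (tendsto_const_nhds.prodMk_nhds tendsto_const_nhds)
    filter_upwards [T1.eventually hev, T2.eventually hev, eventually_gt_nhds ht] with τ h1 h2 hτ
    simp only [Prod.mk_sub_mk, sub_self, hDm] at h1 h2
    have hn : ‖((τ - t, 0) : ℝ × ℝ)‖ = |τ - t| := by simp [Prod.norm_def]
    rw [hn, Real.norm_eq_abs, abs_le] at h1 h2
    rw [smul_eq_mul, Real.norm_eq_abs, Real.norm_eq_abs]
    have e1 := hLle τ hτ r hr _ (hS0 t ht r hr)
    have e2 := hLle t ht r hr _ (hS0 τ hτ r hr)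
    have e3 := hLS t ht r hr
    have e4 := hLS τ hτ r hr
    rw [abs_le]
    constructor <;> linarith [h1.1, h1.2, h2.1, h2.2]
  intro t ht r hr
  refine ⟨S t r, hS0 t ht r hr, hSG t ht r hr, (hLt t ht r hr).deriv, (hLr t ht r hr).deriv, ?_⟩
  have heq : deriv (L t) =ᶠ[𝓝 r] S t := by
    filter_upwards [eventually_gt_nhds hr] with r' hr'
    exact (hLr t ht r' hr').deriv
  rw [heq.deriv_eq]
  apply HasDerivAt.deriv
  refine HasDerivAt.of_local_left_inverse (hScr t ht r hr)
    (hG t ht _ (hS0 t ht r hr)) (hH t ht _ (hS0 t ht r hr)).ne' ?_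
  filter_upwards [eventually_gt_nhds hr] with r' hr'
  exact hSG t ht r' hr'


theorem hasDerivAt_exp_param {X : Type*} [MeasurableSpace X] (μ : Measure X) [IsFiniteMeasure μ]
    (p α β : X → ℝ) (C : ℝ) (hpm : Measurable p) (hαm : Measurable α) (hβm : Measurable β)
    (hp : ∀ x, |p x| ≤ C) (hα : ∀ x, |α x| ≤ C) (hβ : ∀ x, |β x| ≤ C) (h₀ : ℝ) :
    HasDerivAt (fun h => ∫ x, p x * Real.exp (α x + h * β x) ∂μ)
      (∫ x, p x * β x * Real.exp (α x + h₀ * β x) ∂μ) h₀ := by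
  have hexp : ∀ h ∈ Metric.ball h₀ 1, ∀ x, Real.exp (α x + h * β x) ≤
      Real.exp (C + (|h₀| + 1) * C) := by
    intro h hh x
    have hC : 0 ≤ C := (abs_nonneg _).trans (hα x)
    have h1 : |h| ≤ |h₀| + 1 := by
      rw [Metric.mem_ball, Real.dist_eq] at hh
      have := abs_sub_abs_le_abs_sub h h₀
      linarith
    apply Real.exp_le_exp.2
    have h2 : h * β x ≤ (|h₀| + 1) * C :=
      (le_abs_self _).trans (by rw [abs_mul]; exact mul_le_mul h1 (hβ x) (abs_nonneg _) (by positivity))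
    linarith [(le_abs_self _).trans (hα x)]
  refine (hasDerivAt_integral_of_dominated_loc_of_deriv_le (s := Metric.ball h₀ 1)
    (bound := fun _ => C * C * Real.exp (C + (|h₀| + 1) * C)) (F := fun h x => p x * Real.exp (α x + h * β x))
    (F' := fun h x => p x * β x * Real.exp (α x + h * β x))
    (Metric.ball_mem_nhds _ one_pos) ?_ ?_ ?_ ?_ (integrable_const _) ?_).2
  · exact Eventually.of_forall fun h => by fun_prop
  · refine Integrable.mono' (integrable_const (C * Real.exp (C + (|h₀| + 1) * C))) (by fun_prop) ?_
    refine Eventually.of_forall fun x => ?_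
    rw [Real.norm_eq_abs, abs_mul, Real.abs_exp]
    exact mul_le_mul (hp x) (hexp h₀ (Metric.mem_ball_self one_pos) x) (Real.exp_pos _).le
      ((abs_nonneg _).trans (hα x))
  · fun_prop
  · refine Eventually.of_forall fun x h hh => ?_
    have hC : 0 ≤ C := (abs_nonneg _).trans (hα x)
    rw [Real.norm_eq_abs, abs_mul, Real.abs_exp, abs_mul]
    exact mul_le_mul (mul_le_mul (hp x) (hβ x) (abs_nonneg _) hC) (hexp h hh x)
      (Real.exp_pos _).le (by positivity)
  · refine Eventually.of_forall fun x h hh => ?_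
    have : HasDerivAt (fun h => α x + h * β x) (β x) h := by
      simpa using ((hasDerivAt_id h).mul_const (β x)).const_add (α x)
    convert! (this.exp).const_mul (p x) using 1
    ring

abbrev SphE (n : ℕ) := Metric.sphere (0 : EuclideanSpace ℝ (Fin n)) 1

noncomputable abbrev sphM (n : ℕ) : Measure (SphE n) :=
  (volume : Measure (EuclideanSpace ℝ (Fin n))).toSphere

/-- moments of the exponential of the first coordinate on the sphere -/
noncomputable def sphA (n : ℕ) [NeZero n] (k : ℕ) (κ : ℝ) : ℝ :=
  ∫ ω : SphE n, (ω.1 0) ^ k * Real.exp (κ * ω.1 0) ∂(sphM n)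

theorem sph_coord_le {n : ℕ} (ω : SphE n) (i : Fin n) : |ω.1 i| ≤ 1 := by
  have h := EuclideanSpace.norm_eq ω.1
  have h1 : ‖ω.1‖ = 1 := by simp
  have := PiLp.norm_apply_le ω.1 i
  rwa [h1, Real.norm_eq_abs] at this

theorem sph_meas {n : ℕ} (i : Fin n) : Measurable (fun ω : SphE n => ω.1 i) := by
  have : Continuous (fun ω : SphE n => ω.1 i) := by fun_prop
  exact this.measurable

theorem sphA_hasDerivAt (n : ℕ) [NeZero n] (k : ℕ) (κ : ℝ) :
    HasDerivAt (sphA n k) (sphA n (k + 1) κ) κ := by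
  have := hasDerivAt_exp_param (sphM n) (fun ω => (ω.1 0) ^ k) (fun _ => 0) (fun ω => ω.1 0) 1
    ((sph_meas 0).pow_const k) measurable_const (sph_meas 0)
    (fun ω => by rw [abs_pow]; exact pow_le_one₀ (abs_nonneg _) (sph_coord_le ω 0))
    (by simp) (fun ω => sph_coord_le ω 0) κ
  simp only [zero_add] at this
  convert! this using 1

theorem sph_integrable {n : ℕ} (f : SphE n → ℝ) (hf : Continuous f) : Integrable f (sphM n) := by
  have : CompactSpace (SphE n) := isCompact_iff_compactSpace.1 (isCompact_sphere _ _)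
  exact hf.integrable_of_hasCompactSupport (HasCompactSupport.of_compactSpace f)

theorem sphA_abs_le (n : ℕ) [NeZero n] (k : ℕ) (κ : ℝ) :
    |sphA n k κ| ≤ (sphM n).real univ * Real.exp |κ| := by
  rw [sphA, mul_comm, ← Real.norm_eq_abs]
  apply norm_integral_le_of_norm_le_const
  refine Eventually.of_forall fun ω => ?_
  rw [Real.norm_eq_abs, abs_mul, Real.abs_exp, abs_pow]
  have h := sph_coord_le ω 0
  calc _ ≤ 1 * Real.exp (κ * ω.1 0) := by
        gcongr
        exact pow_le_one₀ (abs_nonneg _) h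
    _ ≤ _ := by
      rw [one_mul]
      apply Real.exp_le_exp.2
      calc _ ≤ |κ * ω.1 0| := le_abs_self _
        _ = |κ| * |ω.1 0| := abs_mul _ _
        _ ≤ |κ| * 1 := by gcongr
        _ = _ := mul_one _

theorem sphE_e (n : ℕ) [NeZero n] (c : ℝ) (hc : |c| = 1) :
    EuclideanSpace.single (0 : Fin n) c ∈ Metric.sphere (0 : EuclideanSpace ℝ (Fin n)) 1 := by
  simp [hc]

theorem sph_integral_sq_pos (n : ℕ) [NeZero n] (c κ : ℝ) :
    0 < ∫ ω : SphE n, (ω.1 0 - c) ^ 2 * Real.exp (κ * ω.1 0) ∂(sphM n) := by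
  have hcont : Continuous (fun ω : SphE n => (ω.1 0 - c) ^ 2 * Real.exp (κ * ω.1 0)) := by
    fun_prop
  have key : ∃ ω : SphE n, (ω.1 0 - c) ^ 2 * Real.exp (κ * ω.1 0) ≠ 0 := by
    by_cases h : c = 1
    · refine ⟨⟨EuclideanSpace.single 0 (-1), sphE_e n _ (by simp)⟩, ?_⟩
      subst h
      simp
      norm_num
    · refine ⟨⟨EuclideanSpace.single 0 1, sphE_e n _ (by simp)⟩, ?_⟩
      simp [sub_eq_zero, Ne.symm h]
  obtain ⟨ω, hω⟩ := key
  have : CompactSpace (SphE n) := isCompact_iff_compactSpace.1 (isCompact_sphere _ _)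
  exact hcont.integral_pos_of_hasCompactSupport_nonneg_nonzero
    (HasCompactSupport.of_compactSpace _) (fun ω => by positivity) hω

theorem sphA_pos (n : ℕ) [NeZero n] (κ : ℝ) : 0 < sphA n 0 κ := by
  have hcont : Continuous (fun ω : SphE n => (ω.1 0) ^ 0 * Real.exp (κ * ω.1 0)) := by
    fun_prop
  have : CompactSpace (SphE n) := isCompact_iff_compactSpace.1 (isCompact_sphere _ _)
  refine hcont.integral_pos_of_hasCompactSupport_nonneg_nonzero
    (HasCompactSupport.of_compactSpace _) (fun ω => by simp; positivity)
    (x := ⟨EuclideanSpace.single 0 1, sphE_e n _ (by simp)⟩) (by simp)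

theorem sphA_cs (n : ℕ) [NeZero n] (κ : ℝ) :
    sphA n 1 κ ^ 2 < sphA n 2 κ * sphA n 0 κ := by
  have h0 := sphA_pos n κ
  set c := sphA n 1 κ / sphA n 0 κ with hc
  have h := sph_integral_sq_pos n c κ
  have e : ∫ ω : SphE n, (ω.1 0 - c) ^ 2 * Real.exp (κ * ω.1 0) ∂(sphM n) =
      sphA n 2 κ - 2 * c * sphA n 1 κ + c ^ 2 * sphA n 0 κ := by
    simp only [sphA]
    rw [← integral_const_mul, ← integral_const_mul, ← integral_sub, ← integral_add]
    · congr 1; ext ω; ring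
    all_goals (apply sph_integrable; fun_prop)
  rw [e] at h
  have h1 : c * sphA n 0 κ = sphA n 1 κ := by rw [hc]; field_simp
  have h2 := mul_pos h h0
  have : (sphA n 2 κ - 2 * c * sphA n 1 κ + c ^ 2 * sphA n 0 κ) * sphA n 0 κ =
    sphA n 2 κ * sphA n 0 κ - 2 * (c * sphA n 0 κ) * sphA n 1 κ + (c * sphA n 0 κ) ^ 2 := by ring
  rw [this, h1] at h2
  nlinarith

theorem polar_integral (n : ℕ) [NeZero n] (f : EuclideanSpace ℝ (Fin n) → ℝ) :
    ∫ y, f y = ∫ z : SphE n × Ioi (0 : ℝ), f (z.2.1 • z.1.1)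
      ∂((sphM n).prod (Measure.volumeIoiPow (n - 1))) := by
  have hmp := (volume : Measure (EuclideanSpace ℝ (Fin n))).measurePreserving_homeomorphUnitSphereProd
  rw [finrank_euclideanSpace, Fintype.card_fin] at hmp
  have := hmp.integral_comp (Homeomorph.measurableEmbedding _)
    (fun z : SphE n × Ioi (0 : ℝ) => f (z.2.1 • z.1.1))
  rw [← this]
  have e : ∀ x : ({0}ᶜ : Set (EuclideanSpace ℝ (Fin n))),
      ((homeomorphUnitSphereProd (EuclideanSpace ℝ (Fin n))) x).2.1 •
      ((homeomorphUnitSphereProd (EuclideanSpace ℝ (Fin n))) x).1.1 = x.1 := by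
    intro x
    have hx : ‖x.1‖ ≠ 0 := norm_ne_zero_iff.2 x.2
    simp [smul_smul, hx]
  simp only [e]
  rw [integral_subtype_comap (measurableSet_singleton _).compl (fun x => f x),
    restrict_compl_singleton]

theorem sph_invariant (n : ℕ) [NeZero n]
    (R : EuclideanSpace ℝ (Fin n) ≃ₗᵢ[ℝ] EuclideanSpace ℝ (Fin n))
    (φ : EuclideanSpace ℝ (Fin n) → ℝ) :
    ∫ ω : SphE n, φ (R ω.1) ∂(sphM n) = ∫ ω : SphE n, φ ω.1 ∂(sphM n) := by
  classical
  have key : ∀ φ : EuclideanSpace ℝ (Fin n) → ℝ,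
      ∫ y, φ (‖y‖⁻¹ • y) * (if ‖y‖ < 1 then 1 else 0) =
        (∫ ω : SphE n, φ ω.1 ∂(sphM n)) *
        ∫ ρ : Ioi (0:ℝ), (if ρ.1 < 1 then (1:ℝ) else 0) ∂(Measure.volumeIoiPow (n - 1)) := by
    intro φ
    rw [polar_integral, ← integral_prod_mul]
    congr 1
    ext ⟨ω, ρ⟩
    have hρ : (0:ℝ) < ρ.1 := ρ.2
    have hω : ‖ω.1‖ = 1 := by simp
    simp only [norm_smul, hω, Real.norm_eq_abs, abs_of_pos hρ, mul_one, smul_smul]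
    rw [inv_mul_cancel₀ hρ.ne', one_smul]
  have hc : ∫ ρ : Ioi (0:ℝ), (if ρ.1 < 1 then (1:ℝ) else 0) ∂(Measure.volumeIoiPow (n - 1)) ≠ 0 := by
    have e : (fun ρ : Ioi (0:ℝ) => (if ρ.1 < 1 then (1:ℝ) else 0)) =
        (Iio (⟨1, mem_Ioi.2 one_pos⟩ : Ioi (0:ℝ))).indicator (fun _ => 1) := by
      ext ρ
      simp [indicator, ← Subtype.coe_lt_coe]
    rw [e, integral_indicator measurableSet_Iio, setIntegral_const, measureReal_def,
      Measure.volumeIoiPow_apply_Iio]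
    simp
    rw [ENNReal.toReal_ofReal (by positivity)]
    positivity
  apply mul_right_cancel₀ hc
  rw [← key, ← key (fun y => φ (R y))]
  rw [← (R.measurePreserving).integral_comp' (f := R.toHomeomorph.toMeasurableEquiv)
    (fun y => φ (‖y‖⁻¹ • y) * (if ‖y‖ < 1 then (1:ℝ) else 0))]
  congr 1
  ext y
  simp

theorem sph_radial (n : ℕ) [NeZero n] (x : EuclideanSpace ℝ (Fin n)) :
    ∫ ω : SphE n, Real.exp (inner ℝ x ω.1) ∂(sphM n) = sphA n 0 ‖x‖ := by
  set v : EuclideanSpace ℝ (Fin n) := EuclideanSpace.single 0 ‖x‖ with hv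
  have hvn : ‖v‖ = ‖x‖ := by simp [hv]
  set R := (Submodule.span ℝ {v - x})ᗮ.reflection with hR
  have h1 : R v = x := Submodule.reflection_sub hvn
  rw [← sph_invariant n R (fun y => Real.exp (inner ℝ x y)), sphA]
  congr 1
  ext ω
  have : inner ℝ x (R ω.1) = inner ℝ v ω.1 := by
    rw [← h1, R.inner_map_map]
  rw [this, hv, EuclideanSpace.inner_single_left]
  simp

theorem sphA_one_zero (n : ℕ) [NeZero n] : sphA n 1 0 = 0 := by
  have := sph_invariant n (LinearIsometryEquiv.neg ℝ) (fun y => y 0)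
  simp only [sphA, zero_mul, Real.exp_zero, mul_one, pow_one]
  simp [integral_neg] at this
  linarith

/-- the Bessel equation, coordinatewise -/
theorem sph_coord_sq (n : ℕ) [NeZero n] (i : Fin n) (hi : i ≠ 0) (κ : ℝ) (hκ : 0 < κ) :
    κ * ∫ ω : SphE n, (ω.1 i) ^ 2 * Real.exp (κ * ω.1 0) ∂(sphM n) = sphA n 1 κ := by
  have b0 := fun ω : SphE n => sph_coord_le ω 0
  have bi := fun ω : SphE n => sph_coord_le ω i
  have bk : ∀ ω : SphE n, |κ * ω.1 0| ≤ κ + 1 := by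
    intro ω; rw [abs_mul, abs_of_pos hκ]; nlinarith [b0 ω]
  have bi' : ∀ ω : SphE n, |ω.1 i| ≤ κ + 1 := fun ω => (bi ω).trans (by linarith)
  have hid : ∀ h : ℝ, ∫ ω : SphE n, 1 * Real.exp (κ * ω.1 0 + h * ω.1 i) ∂(sphM n) =
      sphA n 0 (Real.sqrt (κ ^ 2 + h ^ 2)) := by
    intro h
    set x : EuclideanSpace ℝ (Fin n) := EuclideanSpace.single 0 κ + EuclideanSpace.single i h with hx
    have hxn : ‖x‖ = Real.sqrt (κ ^ 2 + h ^ 2) := by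
      have ho : inner ℝ (EuclideanSpace.single (0 : Fin n) κ) (EuclideanSpace.single i h) = 0 := by
        rw [EuclideanSpace.inner_single_left]; simp [Ne.symm hi]
      have := norm_add_sq_eq_norm_sq_add_norm_sq_of_inner_eq_zero _ _ ho
      rw [← hx] at this
      rw [← Real.sqrt_sq (norm_nonneg x)]
      congr 1
      rw [pow_two, this]
      simp [pow_two]
    rw [← hxn, ← sph_radial]
    congr 1; ext ω
    rw [hx, inner_add_left, EuclideanSpace.inner_single_left, EuclideanSpace.inner_single_left]
    simp
  have hsq : ∀ h : ℝ, HasDerivAt (fun h => Real.sqrt (κ ^ 2 + h ^ 2))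
      (h / Real.sqrt (κ ^ 2 + h ^ 2)) h := by
    intro h
    have h1 : HasDerivAt (fun h : ℝ => κ ^ 2 + h ^ 2) (2 * h) h := by
      simpa using (hasDerivAt_pow 2 h).const_add (κ ^ 2)
    convert! h1.sqrt (by positivity) using 1
    ring
  have hfirst : ∀ h : ℝ, ∫ ω : SphE n, 1 * ω.1 i * Real.exp (κ * ω.1 0 + h * ω.1 i) ∂(sphM n) =
      h * (sphA n 1 (Real.sqrt (κ ^ 2 + h ^ 2)) / Real.sqrt (κ ^ 2 + h ^ 2)) := by
    intro h
    have d1 := hasDerivAt_exp_param (sphM n) (fun ω => 1) (fun ω => κ * ω.1 0) (fun ω => ω.1 i) (κ + 1)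
      measurable_const ((sph_meas 0).const_mul κ) (sph_meas i)
      (fun ω => by simp; linarith) bk bi' h
    simp only [hid] at d1
    have d2 := (sphA_hasDerivAt n 0 (Real.sqrt (κ ^ 2 + h ^ 2))).comp h (hsq h)
    have := d1.unique d2
    rw [this]; simp; ring
  have d3 := hasDerivAt_exp_param (sphM n) (fun ω => 1 * ω.1 i) (fun ω => κ * ω.1 0) (fun ω => ω.1 i) (κ + 1)
      (measurable_const.mul (sph_meas i)) ((sph_meas 0).const_mul κ) (sph_meas i)
      (fun ω => by rw [one_mul]; exact bi' ω) bk bi' 0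
  simp only [hfirst] at d3
  have hs0 : Real.sqrt (κ ^ 2 + 0 ^ 2) = κ := by simp [Real.sqrt_sq hκ.le]
  have c1 := (sphA_hasDerivAt n 1 (Real.sqrt (κ ^ 2 + 0 ^ 2))).comp (0 : ℝ) (hsq 0)
  have d4 := c1.div (hsq 0) (by rw [hs0]; exact hκ.ne')
  have d5 := ((hasDerivAt_id (0:ℝ)).mul d4)
  have := d3.unique d5
  simp only [id, Pi.div_apply, Function.comp, hs0, zero_mul, add_zero, one_mul] at this
  have e : ∀ ω : SphE n, ω.1 i * ω.1 i * Real.exp (κ * ω.1 0) = (ω.1 i) ^ 2 * Real.exp (κ * ω.1 0) :=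
    fun ω => by ring
  simp only [e] at this
  rw [this]; field_simp

theorem sphA_bessel (n : ℕ) [NeZero n] (κ : ℝ) (hκ : 0 < κ) :
    κ * sphA n 2 κ + ((n : ℝ) - 1) * sphA n 1 κ = κ * sphA n 0 κ := by
  have hsum : sphA n 0 κ = ∑ i : Fin n, ∫ ω : SphE n, (ω.1 i) ^ 2 * Real.exp (κ * ω.1 0) ∂(sphM n) := by
    rw [← integral_finsetSum]
    · rw [sphA]; congr 1; ext ω
      have h1 : ‖ω.1‖ = 1 := by simp
      have := EuclideanSpace.norm_sq_eq ω.1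
      rw [h1] at this
      simp only [Real.norm_eq_abs, sq_abs] at this
      rw [← Finset.sum_mul, ← this]; simp
    · intro i _
      apply sph_integrable; fun_prop
  have h2 : κ * sphA n 0 κ = ∑ i : Fin n, κ * ∫ ω : SphE n, (ω.1 i) ^ 2 * Real.exp (κ * ω.1 0) ∂(sphM n) := by
    rw [hsum, Finset.mul_sum]
  rw [h2, ← Finset.add_sum_erase _ _ (Finset.mem_univ (0 : Fin n))]
  rw [Finset.sum_congr rfl (fun i hi => sph_coord_sq n i (Finset.ne_of_mem_erase hi) κ hκ)]
  rw [Finset.sum_const, Finset.card_erase_of_mem (Finset.mem_univ _), Finset.card_univ, Fintype.card_fin,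
    nsmul_eq_mul, Nat.cast_sub (NeZero.one_le)]
  simp [sphA]

theorem sphA_bessel' (n : ℕ) [NeZero n] (κ : ℝ) (hκ : 0 < κ) :
    κ * sphA n 3 κ + n * sphA n 2 κ = sphA n 0 κ + κ * sphA n 1 κ := by
  have d1 := ((hasDerivAt_id κ).mul (sphA_hasDerivAt n 2 κ)).add
    ((sphA_hasDerivAt n 1 κ).const_mul ((n:ℝ) - 1))
  have d2 := (hasDerivAt_id κ).mul (sphA_hasDerivAt n 0 κ)
  have he : (id * sphA n 2 + fun y => ((n:ℝ) - 1) * sphA n 1 y) =ᶠ[nhds κ] id * sphA n 0 := by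
    filter_upwards [eventually_gt_nhds hκ] with x hx
    exact sphA_bessel n x hx
  have := d1.unique (d2.congr_of_eventuallyEq he)
  simp only [id] at this
  norm_num at this
  linarith

theorem sphA_two_pos (n : ℕ) [NeZero n] (κ : ℝ) : 0 < sphA n 2 κ := by
  have := sphA_cs n κ
  have h0 := sphA_pos n κ
  by_contra h
  nlinarith [sq_nonneg (sphA n 1 κ)]

theorem sphA_one_pos (n : ℕ) [NeZero n] (κ : ℝ) (hκ : 0 < κ) : 0 < sphA n 1 κ := by
  have : StrictMono (sphA n 1) := strictMono_of_hasDerivAt_pos (fun x => sphA_hasDerivAt n 1 x)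
    (fun x => sphA_two_pos n x)
  rw [← sphA_one_zero n]; exact this hκ

/-- logarithmic derivative is increasing -/
theorem sphA_ratio_mono (n : ℕ) [NeZero n] : StrictMono (fun κ => sphA n 1 κ / sphA n 0 κ) := by
  apply strictMono_of_hasDerivAt_pos
    (fun x => (sphA_hasDerivAt n 1 x).div (sphA_hasDerivAt n 0 x) (sphA_pos n x).ne')
  intro x
  apply div_pos _ (by have := sphA_pos n x; positivity)
  have := sphA_cs n x
  norm_num
  nlinarith


theorem integrableOn_pow_exp (j : ℕ) (c b : ℝ) (hb : 0 < b) :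
    IntegrableOn (fun ρ : ℝ => ρ ^ j * Real.exp (c * ρ - b * ρ ^ 2)) (Ioi 0) := by
  have h1 := integrable_rpow_mul_exp_neg_mul_sq (b := b / 2) (by linarith) (s := (j : ℝ))
    (by have : (0:ℝ) ≤ j := Nat.cast_nonneg j
        linarith)
  have h2 := (h1.const_mul (Real.exp (c ^ 2 / (2 * b)))).integrableOn (s := Ioi 0)
  refine Integrable.mono' h2 (by fun_prop) ?_
  filter_upwards [ae_restrict_mem measurableSet_Ioi] with ρ hρ
  have hρ : (0:ℝ) < ρ := hρ
  rw [Real.norm_eq_abs, abs_of_nonneg (by positivity), Real.rpow_natCast, mul_left_comm, ← Real.exp_add]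
  gcongr
  have : 0 ≤ (c - b * ρ) ^ 2 / (2 * b) := by positivity
  have e : (c - b * ρ) ^ 2 / (2 * b) = c ^ 2 / (2 * b) - c * ρ + b * ρ ^ 2 / 2 := by
    field_simp; ring
  linarith

noncomputable def Jint (n : ℕ) [NeZero n] (g : ℝ → ℝ) (k j : ℕ) (p : ℝ × ℝ) : ℝ :=
  ∫ ρ in Ioi (0:ℝ), sphA n k (p.1 * ρ) * ρ ^ j * (Real.exp (-p.2 * ρ ^ 2) * g ρ)

theorem sphA_continuous (n : ℕ) [NeZero n] (k : ℕ) : Continuous (sphA n k) :=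
  continuous_iff_continuousAt.2 fun x => (sphA_hasDerivAt n k x).continuousAt


theorem Jbound (n : ℕ) [NeZero n] (g : ℝ → ℝ) (hg : ∀ ρ > 0, |g ρ| ≤ 1)
    (k j : ℕ) (a b c b' : ℝ) (hac : |a| ≤ c) (hbb : b' ≤ b) (ρ : ℝ) (hρ : 0 < ρ) :
    |sphA n k (a * ρ) * ρ ^ j * (Real.exp (-b * ρ ^ 2) * g ρ)| ≤
      (sphM n).real univ * (ρ ^ j * Real.exp (c * ρ - b' * ρ ^ 2)) := by
  rw [abs_mul, abs_mul, abs_mul, Real.abs_exp, abs_of_pos (pow_pos hρ j)]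
  have h1 := sphA_abs_le n k (a * ρ)
  rw [abs_mul, abs_of_pos hρ] at h1
  have h0 : 0 ≤ (sphM n).real univ := measureReal_nonneg
  calc _ ≤ (sphM n).real univ * Real.exp (|a| * ρ) * ρ ^ j * (Real.exp (-b * ρ ^ 2) * 1) := by
        gcongr
        exact hg ρ hρ
    _ ≤ (sphM n).real univ * Real.exp (c * ρ) * ρ ^ j * (Real.exp (-b' * ρ ^ 2) * 1) := by
        gcongr
    _ = _ := by rw [sub_eq_add_neg, Real.exp_add]; ring_nf

theorem Jmeas (n : ℕ) [NeZero n] (g : ℝ → ℝ) (hgm : AEStronglyMeasurable g (volume.restrict (Ioi 0)))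
    (k j : ℕ) (p : ℝ × ℝ) :
    AEStronglyMeasurable (fun ρ => sphA n k (p.1 * ρ) * ρ ^ j * (Real.exp (-p.2 * ρ ^ 2) * g ρ))
      (volume.restrict (Ioi 0)) := by
  have hc := sphA_continuous n k
  have h1 : Continuous (fun ρ => sphA n k (p.1 * ρ) * ρ ^ j) := by fun_prop
  have h2 : Continuous (fun ρ => Real.exp (-p.2 * ρ ^ 2)) := by fun_prop
  exact h1.aestronglyMeasurable.mul (h2.aestronglyMeasurable.mul hgm)

theorem Jintegrable (n : ℕ) [NeZero n] (g : ℝ → ℝ) (hgm : AEStronglyMeasurable g (volume.restrict (Ioi 0))) (hg : ∀ ρ > 0, |g ρ| ≤ 1)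
    (k j : ℕ) (p : ℝ × ℝ) (hp : 0 < p.2) :
    IntegrableOn (fun ρ => sphA n k (p.1 * ρ) * ρ ^ j * (Real.exp (-p.2 * ρ ^ 2) * g ρ)) (Ioi 0) := by
  refine Integrable.mono' ((integrableOn_pow_exp j |p.1| p.2 hp).const_mul ((sphM n).real univ))
    (Jmeas n g hgm k j p) ?_
  filter_upwards [ae_restrict_mem measurableSet_Ioi] with ρ hρ
  exact Jbound n g hg k j p.1 p.2 |p.1| p.2 le_rfl le_rfl ρ hρ

theorem J_hasFDerivAt (n : ℕ) [NeZero n] (g : ℝ → ℝ) (hgm : AEStronglyMeasurable g (volume.restrict (Ioi 0))) (hg : ∀ ρ > 0, |g ρ| ≤ 1)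
    (k j : ℕ) (p : ℝ × ℝ) (hp : 0 < p.2) :
    HasFDerivAt (Jint n g k j)
      (Jint n g (k + 1) (j + 1) p • ContinuousLinearMap.fst ℝ ℝ ℝ
        - Jint n g k (j + 2) p • ContinuousLinearMap.snd ℝ ℝ ℝ) p := by
  set F' : ℝ × ℝ → ℝ → ℝ × ℝ →L[ℝ] ℝ := fun q ρ =>
    (sphA n (k + 1) (q.1 * ρ) * ρ ^ (j + 1) * (Real.exp (-q.2 * ρ ^ 2) * g ρ)) •
        ContinuousLinearMap.fst ℝ ℝ ℝ
      - (sphA n k (q.1 * ρ) * ρ ^ (j + 2) * (Real.exp (-q.2 * ρ ^ 2) * g ρ)) •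
        ContinuousLinearMap.snd ℝ ℝ ℝ with hF'
  have hint : ∫ ρ in Ioi 0, F' p ρ = (Jint n g (k + 1) (j + 1) p • ContinuousLinearMap.fst ℝ ℝ ℝ
        - Jint n g k (j + 2) p • ContinuousLinearMap.snd ℝ ℝ ℝ) := by
    simp only [hF']
    rw [integral_sub, integral_smul_const, integral_smul_const]
    · rfl
    · exact (Jintegrable n g hgm hg _ _ p hp).smul_const _
    · exact (Jintegrable n g hgm hg _ _ p hp).smul_const _
  rw [← hint]
  set c := |p.1| + p.2 / 2
  have hball : ∀ q ∈ Metric.ball p (p.2 / 2), |q.1| ≤ c ∧ p.2 / 2 ≤ q.2 := by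
    intro q hq
    rw [Metric.mem_ball, Prod.dist_eq, max_lt_iff, Real.dist_eq, Real.dist_eq] at hq
    have := abs_sub_abs_le_abs_sub q.1 p.1
    have h2 := (abs_lt.1 hq.2).1
    constructor
    · simp only [c]; linarith [hq.1]
    · linarith
  refine hasFDerivAt_integral_of_dominated_of_fderiv_le (s := Metric.ball p (p.2 / 2))
    (F := fun q ρ => sphA n k (q.1 * ρ) * ρ ^ j * (Real.exp (-q.2 * ρ ^ 2) * g ρ))
    (bound := fun ρ => (sphM n).real univ * (ρ ^ (j + 1) * Real.exp (c * ρ - (p.2 / 2) * ρ ^ 2)) +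
      (sphM n).real univ * (ρ ^ (j + 2) * Real.exp (c * ρ - (p.2 / 2) * ρ ^ 2)))
    (Metric.ball_mem_nhds _ (by linarith)) ?_ ?_ ?_ ?_ ?_ ?_
  · exact Eventually.of_forall fun q => Jmeas n g hgm k j q
  · exact Jintegrable n g hgm hg k j p hp
  · exact ((Jintegrable n g hgm hg _ _ p hp).smul_const _).aestronglyMeasurable.sub
      ((Jintegrable n g hgm hg _ _ p hp).smul_const _).aestronglyMeasurable
  · filter_upwards [ae_restrict_mem measurableSet_Ioi] with ρ hρ q hq
    obtain ⟨h1, h2⟩ := hball q hq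
    refine (norm_sub_le _ _).trans ?_
    rw [norm_smul, norm_smul]
    refine add_le_add ?_ ?_
    · refine (mul_le_of_le_one_right (norm_nonneg _) (ContinuousLinearMap.norm_fst_le ..)).trans ?_
      exact Jbound n g hg _ _ _ _ _ _ h1 h2 ρ hρ
    · refine (mul_le_of_le_one_right (norm_nonneg _) (ContinuousLinearMap.norm_snd_le ..)).trans ?_
      exact Jbound n g hg _ _ _ _ _ _ h1 h2 ρ hρ
  · exact ((integrableOn_pow_exp _ _ _ (by linarith)).const_mul _).add
      ((integrableOn_pow_exp _ _ _ (by linarith)).const_mul _)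
  · refine Eventually.of_forall fun ρ q hq => ?_
    have d0 : HasFDerivAt (fun q : ℝ × ℝ => q.1 * ρ) (ρ • ContinuousLinearMap.fst ℝ ℝ ℝ) q :=
      (hasFDerivAt_fst (𝕜 := ℝ) (E := ℝ) (F := ℝ) (p := q)).mul_const ρ
    have d1 := HasDerivAt.comp_hasFDerivAt (h₂ := sphA n k) q (sphA_hasDerivAt n k (q.1 * ρ)) d0
    have d2 : HasFDerivAt (fun q : ℝ × ℝ => Real.exp (-q.2 * ρ ^ 2)) _ q :=
      ((hasFDerivAt_snd (𝕜 := ℝ) (E := ℝ) (F := ℝ) (p := q)).neg.mul_const (ρ ^ 2)).exp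
    convert! (d1.mul_const (ρ ^ j)).mul (d2.mul_const (g ρ)) using 1
    ext <;> simp [hF'] <;> ring

theorem J_continuousAt (n : ℕ) [NeZero n] (g : ℝ → ℝ) (hgm : AEStronglyMeasurable g (volume.restrict (Ioi 0))) (hg : ∀ ρ > 0, |g ρ| ≤ 1)
    (k j : ℕ) (p : ℝ × ℝ) (hp : 0 < p.2) : ContinuousAt (Jint n g k j) p :=
  (J_hasFDerivAt n g hgm hg k j p hp).continuousAt

theorem J_hasStrictFDerivAt (n : ℕ) [NeZero n] (g : ℝ → ℝ) (hgm : AEStronglyMeasurable g (volume.restrict (Ioi 0))) (hg : ∀ ρ > 0, |g ρ| ≤ 1)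
    (k j : ℕ) (p : ℝ × ℝ) (hp : 0 < p.2) :
    HasStrictFDerivAt (Jint n g k j)
      (Jint n g (k + 1) (j + 1) p • ContinuousLinearMap.fst ℝ ℝ ℝ
        - Jint n g k (j + 2) p • ContinuousLinearMap.snd ℝ ℝ ℝ) p := by
  refine hasStrictFDerivAt_of_hasFDerivAt_of_continuousAt
    (f' := fun p => Jint n g (k + 1) (j + 1) p • ContinuousLinearMap.fst ℝ ℝ ℝ
        - Jint n g k (j + 2) p • ContinuousLinearMap.snd ℝ ℝ ℝ) ?_ ?_
  · have : ∀ᶠ q : ℝ × ℝ in nhds p, 0 < q.2 := continuousAt_snd.eventually_const_lt hp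
    filter_upwards [this] with q hq
    exact J_hasFDerivAt n g hgm hg k j q hq
  · exact ((J_continuousAt n g hgm hg _ _ p hp).smul continuousAt_const).sub
      ((J_continuousAt n g hgm hg _ _ p hp).smul continuousAt_const)

theorem J_bessel (n : ℕ) [NeZero n] (g : ℝ → ℝ) (hgm : AEStronglyMeasurable g (volume.restrict (Ioi 0))) (hg : ∀ ρ > 0, |g ρ| ≤ 1)
    (j : ℕ) (a b : ℝ) (ha : 0 < a) (hb : 0 < b) :
    a * Jint n g 2 (j + 2) (a, b) + ((n:ℝ) - 1) * Jint n g 1 (j + 1) (a, b) =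
      a * Jint n g 0 (j + 2) (a, b) := by
  have i1 := Jintegrable n g hgm hg 2 (j + 2) (a, b) hb
  have i2 := Jintegrable n g hgm hg 1 (j + 1) (a, b) hb
  simp only [Jint]
  rw [← integral_const_mul, ← integral_const_mul, ← integral_const_mul,
    ← integral_add (i1.const_mul _) (i2.const_mul _)]
  refine setIntegral_congr_fun measurableSet_Ioi fun ρ hρ => ?_
  have := sphA_bessel n (a * ρ) (mul_pos ha hρ)
  simp only
  linear_combination ρ ^ (j + 1) * (Real.exp (-b * ρ ^ 2) * g ρ) * this

theorem J_zero_pos (n : ℕ) [NeZero n] (g : ℝ → ℝ) (hgm : AEStronglyMeasurable g (volume.restrict (Ioi 0))) (hg : ∀ ρ > 0, |g ρ| ≤ 1)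
    (hg0 : ∀ ρ > 0, 0 < g ρ) (j : ℕ) (p : ℝ × ℝ) (hp : 0 < p.2) :
    0 < Jint n g 0 j p := by
  rw [Jint, setIntegral_pos_iff_support_of_nonneg_ae]
  · have : Function.support (fun ρ => sphA n 0 (p.1 * ρ) * ρ ^ j * (Real.exp (-p.2 * ρ ^ 2) * g ρ)) ∩ Ioi 0
        = Ioi 0 := by
      apply inter_eq_right.2
      intro ρ hρ
      have h1 := sphA_pos n (p.1 * ρ)
      have h2 := hg0 ρ hρ
      have h3 : (0:ℝ) < ρ := hρ
      exact (by positivity : 0 < sphA n 0 (p.1 * ρ) * ρ ^ j * (Real.exp (-p.2 * ρ ^ 2) * g ρ)).ne'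
    rw [this]; simp
  · filter_upwards [ae_restrict_mem measurableSet_Ioi] with ρ hρ
    have h1 := sphA_pos n (p.1 * ρ)
    have h2 := hg0 ρ hρ
    have h3 : (0:ℝ) < ρ := hρ
    simp only [Pi.zero_apply]
    positivity
  · exact Jintegrable n g hgm hg 0 j p hp



theorem W_bound (n : ℕ) [NeZero n] (k j : ℕ) (a b : ℝ) (hb : 0 < b) :
    ∃ C, 0 ≤ C ∧ ∀ ρ > 0, |sphA n k (a * ρ) * ρ ^ j * Real.exp (-b * ρ ^ 2)| ≤ C * Real.exp (-ρ) := by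
  refine ⟨(sphM n).real univ * (j.factorial * Real.exp ((|a| + 2) ^ 2 / (4 * b))), by positivity, ?_⟩
  intro ρ hρ
  have h := Jbound n (fun _ => 1) (by simp) k j a b |a| b le_rfl le_rfl ρ hρ
  simp only [mul_one] at h
  refine h.trans ?_
  rw [mul_assoc, mul_assoc]
  refine mul_le_mul_of_nonneg_left ?_ measureReal_nonneg
  have h1 : ρ ^ j ≤ j.factorial * Real.exp ρ := by
    have := Real.pow_div_factorial_le_exp ρ hρ.le j
    rwa [div_le_iff₀ (by positivity), mul_comm] at this
  calc _ ≤ (j.factorial * Real.exp ρ) * Real.exp (|a| * ρ - b * ρ ^ 2) := by gcongr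
    _ = j.factorial * Real.exp (ρ + (|a| * ρ - b * ρ ^ 2)) := by rw [mul_assoc, ← Real.exp_add]
    _ ≤ j.factorial * Real.exp ((|a| + 2) ^ 2 / (4 * b) + -ρ) := by
      refine mul_le_mul_of_nonneg_left (Real.exp_le_exp.2 ?_) (by positivity)
      have : 0 ≤ (|a| + 2 - 2 * b * ρ) ^ 2 / (4 * b) := by positivity
      have e : (|a| + 2 - 2 * b * ρ) ^ 2 / (4 * b) =
        (|a| + 2) ^ 2 / (4 * b) - (|a| + 2) * ρ + b * ρ ^ 2 := by field_simp; ring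
      linarith
    _ = _ := by rw [Real.exp_add]


noncomputable def rD (Ψ : ℝ → ℝ) (ρ : ℝ) : ℝ := derivWithin Ψ (Ioi ρ) ρ

theorem rD_mono (Ψ : ℝ → ℝ) (hconv : ConvexOn ℝ (Set.Ici 0) Ψ)
    : MonotoneOn (rD Ψ) (Ioi 0) := by
  have := hconv.monotoneOn_rightDeriv
  rwa [interior_Ici] at this

theorem rD_has (Ψ : ℝ → ℝ) (hconv : ConvexOn ℝ (Set.Ici 0) Ψ)
    (ρ : ℝ) (hρ : 0 < ρ) : HasDerivWithinAt Ψ (rD Ψ ρ) (Ioi ρ) ρ := by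
  apply hconv.hasDerivWithinAt_rightDeriv_of_mem_interior
  rwa [interior_Ici]

theorem rD_nonneg (Ψ : ℝ → ℝ) (hconv : ConvexOn ℝ (Set.Ici 0) Ψ) (hmono : MonotoneOn Ψ (Set.Ici 0))
    (ρ : ℝ) (hρ : 0 < ρ) : 0 ≤ rD Ψ ρ := by
  have h := rD_has Ψ hconv ρ hρ
  rw [hasDerivWithinAt_iff_tendsto_slope' (by simp)] at h
  refine ge_of_tendsto h ?_
  filter_upwards [self_mem_nhdsWithin] with x hx
  have hx : ρ < x := hx
  rw [slope_def_field]
  have := hmono hρ.le (hρ.trans hx).le hx.le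
  apply div_nonneg <;> linarith

theorem rD_exists_pos (Ψ : ℝ → ℝ) (hconv : ConvexOn ℝ (Set.Ici 0) Ψ) (hmono : MonotoneOn Ψ (Set.Ici 0)) (h0 : Ψ 0 = 0) (hsuper : Tendsto (fun x => Ψ x / x) atTop atTop)
    : ∃ ρ > 0, 0 < rD Ψ ρ := by
  by_contra hcon
  push Not at hcon
  have hz : ∀ x > 0, Ψ x ≤ 0 := by
    intro x hx
    have hr : rD Ψ x = 0 := le_antisymm (hcon x hx) (rD_nonneg Ψ hconv hmono x hx)
    have := hconv.isMinOn_of_rightDeriv_eq_zero (x := x) (by rwa [interior_Ici]) hr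
    rw [← h0]
    exact this (self_mem_Ici (a := (0:ℝ)))
  obtain ⟨x, h1, h2⟩ := ((hsuper.eventually_gt_atTop 0).and (eventually_gt_atTop 0)).exists
  have := div_nonpos_of_nonpos_of_nonneg (hz x h2) h2.le
  linarith

theorem Psi_cont (Ψ : ℝ → ℝ) (hconv : ConvexOn ℝ (Set.Ici 0) Ψ) (h0 : Ψ 0 = 0) (hnonneg : ∀ r ∈ Set.Ici (0 : ℝ), 0 ≤ Ψ r)
    : ContinuousOn Ψ (Ici 0) := by
  intro x hx
  rcases eq_or_lt_of_le (show (0:ℝ) ≤ x from hx) with h | h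
  · subst h
    rw [ContinuousWithinAt, h0]
    have up : Tendsto (fun x : ℝ => x * Ψ 1) (nhdsWithin 0 (Ici 0)) (nhds 0) := by
      have : Continuous (fun x : ℝ => x * Ψ 1) := by fun_prop
      have := (this.tendsto 0).mono_left (nhdsWithin_le_nhds (s := Ici 0))
      simpa using this
    refine tendsto_of_tendsto_of_tendsto_of_le_of_le' tendsto_const_nhds up ?_ ?_
    · filter_upwards [self_mem_nhdsWithin] with y hy using hnonneg y hy
    · filter_upwards [self_mem_nhdsWithin, nhdsWithin_le_nhds (eventually_lt_nhds one_pos)] with y hy hy1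
      have := hconv.2 (show (0:ℝ) ∈ Ici 0 by simp) (show (1:ℝ) ∈ Ici 0 by simp)
        (show 0 ≤ 1 - y by linarith) hy (by ring)
      simpa [h0] using this
  · have := hconv.continuousOn_interior
    rw [interior_Ici] at this
    exact (this.continuousAt (Ioi_mem_nhds h)).continuousWithinAt

theorem g_meas (Ψ : ℝ → ℝ) (hmono : MonotoneOn Ψ (Set.Ici 0))
    : AEStronglyMeasurable (fun ρ => Real.exp (-Ψ ρ)) (volume.restrict (Ioi 0)) := by
  have h : AEMeasurable Ψ (volume.restrict (Ioi 0)) :=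
    aemeasurable_restrict_of_monotoneOn measurableSet_Ioi (hmono.mono Ioi_subset_Ici_self)
  exact (h.neg.exp).aestronglyMeasurable

theorem g_le (Ψ : ℝ → ℝ) (hnonneg : ∀ r ∈ Set.Ici (0 : ℝ), 0 ≤ Ψ r)
    : ∀ ρ > 0, |Real.exp (-Ψ ρ)| ≤ 1 := by
  intro ρ hρ
  rw [Real.abs_exp, Real.exp_le_one_iff]
  linarith [hnonneg ρ (le_of_lt hρ)]

theorem rD_meas (Ψ : ℝ → ℝ) (hconv : ConvexOn ℝ (Set.Ici 0) Ψ)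
    : AEStronglyMeasurable (rD Ψ) (volume.restrict (Ioi 0)) :=
  (aemeasurable_restrict_of_monotoneOn measurableSet_Ioi (rD_mono Ψ hconv)).aestronglyMeasurable

theorem rDg_integrable (Ψ : ℝ → ℝ) (hconv : ConvexOn ℝ (Set.Ici 0) Ψ) (hmono : MonotoneOn Ψ (Set.Ici 0)) (h0 : Ψ 0 = 0) (hnonneg : ∀ r ∈ Set.Ici (0 : ℝ), 0 ≤ Ψ r)
    : IntegrableOn (fun ρ => rD Ψ ρ * Real.exp (-Ψ ρ)) (Ioi 0) := by
  have hm : AEStronglyMeasurable (fun ρ => rD Ψ ρ * Real.exp (-Ψ ρ)) (volume.restrict (Ioi 0)) :=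
    (rD_meas Ψ hconv).mul (g_meas Ψ hmono)
  have hi : ∀ R : ℝ, IntegrableOn (fun ρ => rD Ψ ρ * Real.exp (-Ψ ρ)) (Ioc 0 R) := by
    intro R
    refine Integrable.mono' (g := fun _ => rD Ψ R) (by simp)
      (hm.mono_measure (Measure.restrict_mono Ioc_subset_Ioi_self le_rfl)) ?_
    filter_upwards [ae_restrict_mem measurableSet_Ioc] with ρ hρ
    have e := g_le Ψ hnonneg ρ hρ.1
    have p := rD_nonneg Ψ hconv hmono ρ hρ.1
    rw [Real.norm_eq_abs, abs_mul, abs_of_nonneg p]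
    exact (mul_le_of_le_one_right p e).trans (rD_mono Ψ hconv hρ.1 (hρ.1.trans_le hρ.2) hρ.2)
  refine integrableOn_Ioi_of_intervalIntegral_norm_bounded (l := atTop) (b := id) 1 0 hi tendsto_id ?_
  filter_upwards [eventually_gt_atTop 0] with R hR
  have hcont : ContinuousOn (fun ρ => -Real.exp (-Ψ ρ)) (Icc 0 R) :=
    (((Psi_cont Ψ hconv h0 hnonneg).mono Icc_subset_Ici_self).neg.rexp).neg
  have := intervalIntegral.integral_eq_sub_of_hasDeriv_right_of_le hR.le hcont
    (f' := fun ρ => rD Ψ ρ * Real.exp (-Ψ ρ)) (fun x hx => by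
      convert! ((rD_has Ψ hconv x hx.1).neg.exp).neg using 1
      simp only [Pi.neg_apply]; ring) ((intervalIntegrable_iff_integrableOn_Ioc_of_le hR.le).2 (hi R))
  have e : ∫ x in (0:ℝ)..id R, ‖rD Ψ x * Real.exp (-Ψ x)‖ = ∫ x in (0:ℝ)..R, rD Ψ x * Real.exp (-Ψ x) := by
    rw [id, intervalIntegral.integral_of_le hR.le, intervalIntegral.integral_of_le hR.le]
    refine setIntegral_congr_fun measurableSet_Ioc fun x hx => ?_
    have p := rD_nonneg Ψ hconv hmono x hx.1
    exact Real.norm_of_nonneg (by positivity)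
  rw [e, this, h0]
  simp
  positivity

theorem Wrd_integrable (Ψ : ℝ → ℝ) (hconv : ConvexOn ℝ (Set.Ici 0) Ψ) (hmono : MonotoneOn Ψ (Set.Ici 0)) (h0 : Ψ 0 = 0) (hnonneg : ∀ r ∈ Set.Ici (0 : ℝ), 0 ≤ Ψ r)
    (n : ℕ) [NeZero n] (k j : ℕ) (a b : ℝ) (hb : 0 < b) :
    IntegrableOn (fun ρ => (sphA n k (a * ρ) * ρ ^ j * Real.exp (-b * ρ ^ 2)) *
      (rD Ψ ρ * Real.exp (-Ψ ρ))) (Ioi 0) := by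
  obtain ⟨C, hC, hW⟩ := W_bound n k j a b hb
  have hc := sphA_continuous n k
  have h1 : Continuous (fun ρ => sphA n k (a * ρ) * ρ ^ j * Real.exp (-b * ρ ^ 2)) := by fun_prop
  refine Integrable.bdd_mul (c := C) (rDg_integrable Ψ hconv hmono h0 hnonneg) h1.aestronglyMeasurable ?_
  filter_upwards [ae_restrict_mem measurableSet_Ioi] with ρ hρ
  refine (hW ρ hρ).trans (mul_le_of_le_one_right hC ?_)
  rw [Real.exp_le_one_iff]
  have : (0:ℝ) < ρ := hρ
  linarith

theorem ibp (Ψ : ℝ → ℝ) (hconv : ConvexOn ℝ (Set.Ici 0) Ψ) (hmono : MonotoneOn Ψ (Set.Ici 0)) (h0 : Ψ 0 = 0) (hnonneg : ∀ r ∈ Set.Ici (0 : ℝ), 0 ≤ Ψ r)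
    (n : ℕ) [NeZero n] (k j : ℕ) (a b : ℝ) (hb : 0 < b) (hz : sphA n k 0 * 0 ^ j = 0)
    (W' : ℝ → ℝ) (hW' : ∀ ρ > 0, HasDerivAt
      (fun ρ => sphA n k (a * ρ) * ρ ^ j * Real.exp (-b * ρ ^ 2)) (W' ρ) ρ)
    (hint : IntegrableOn (fun ρ => W' ρ * Real.exp (-Ψ ρ)) (Ioi 0)) :
    ∫ ρ in Ioi 0, W' ρ * Real.exp (-Ψ ρ) =
      ∫ ρ in Ioi 0, (sphA n k (a * ρ) * ρ ^ j * Real.exp (-b * ρ ^ 2)) *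
      (rD Ψ ρ * Real.exp (-Ψ ρ)) := by
  have i2 := Wrd_integrable Ψ hconv hmono h0 hnonneg n k j a b hb
  rw [← sub_eq_zero, ← integral_sub hint i2]
  have lim1 := intervalIntegral_tendsto_integral_Ioi 0 (hint.sub i2) tendsto_id
  refine tendsto_nhds_unique lim1 ?_
  have hc := sphA_continuous n k
  have h1 : Continuous (fun ρ => sphA n k (a * ρ) * ρ ^ j * Real.exp (-b * ρ ^ 2)) := by fun_prop
  have hev : ∀ᶠ R : ℝ in atTop, sphA n k (a * R) * R ^ j * Real.exp (-b * R ^ 2) * Real.exp (-Ψ R) =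
      ∫ ρ in (0:ℝ)..id R, (W' ρ * Real.exp (-Ψ ρ) - (sphA n k (a * ρ) * ρ ^ j * Real.exp (-b * ρ ^ 2)) *
      (rD Ψ ρ * Real.exp (-Ψ ρ))) := by
    filter_upwards [eventually_gt_atTop 0] with R hR
    have hcont : ContinuousOn (fun ρ => sphA n k (a * ρ) * ρ ^ j * Real.exp (-b * ρ ^ 2) *
        Real.exp (-Ψ ρ)) (Icc 0 R) :=
      h1.continuousOn.mul (((Psi_cont Ψ hconv h0 hnonneg).mono Icc_subset_Ici_self).neg.rexp)
    rw [id, intervalIntegral.integral_eq_sub_of_hasDeriv_right_of_le hR.le hcont]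
    · simp [hz]
    · intro x hx
      convert! ((hW' x hx.1).hasDerivWithinAt (s := Ioi x)).mul ((rD_has Ψ hconv x hx.1).neg.exp) using 1
      simp only [Pi.neg_apply]; ring
    · rw [intervalIntegrable_iff_integrableOn_Ioc_of_le hR.le]
      exact (hint.sub i2).mono_set Ioc_subset_Ioi_self
  refine Tendsto.congr' hev ?_
  obtain ⟨C, hC, hW⟩ := W_bound n k j a b hb
  have : Tendsto (fun R : ℝ => C * Real.exp (-R)) atTop (nhds 0) := by
    simpa using (Real.tendsto_exp_neg_atTop_nhds_zero).const_mul C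
  refine squeeze_zero_norm' ?_ this
  filter_upwards [eventually_gt_atTop 0] with R hR
  rw [norm_mul]
  exact (mul_le_of_le_one_right (norm_nonneg _) (g_le Ψ hnonneg R hR)).trans (hW R hR)



theorem int_lin3 (μ : Measure ℝ) (f g h : ℝ → ℝ) (hf : Integrable f μ) (hg : Integrable g μ)
    (hh : Integrable h μ) (a c : ℝ) :
    ∫ x, (f x + a * g x - c * h x) ∂μ = ∫ x, f x ∂μ + a * ∫ x, g x ∂μ - c * ∫ x, h x ∂μ := by
  have h1 : Integrable (fun x => f x + a * g x) μ := hf.add (hg.const_mul a)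
  rw [integral_sub h1 (hh.const_mul c), integral_add hf (hg.const_mul a), integral_const_mul,
    integral_const_mul]

theorem int_lin2 (μ : Measure ℝ) (f g : ℝ → ℝ) (hf : Integrable f μ) (hg : Integrable g μ)
    (a c : ℝ) :
    ∫ x, (a * f x - c * g x) ∂μ = a * ∫ x, f x ∂μ - c * ∫ x, g x ∂μ := by
  rw [integral_sub (hf.const_mul a) (hg.const_mul c), integral_const_mul, integral_const_mul]

theorem int_lin4 (μ : Measure ℝ) (f g h k : ℝ → ℝ) (hf : Integrable f μ) (hg : Integrable g μ)
    (hh : Integrable h μ) (hk : Integrable k μ) (c K : ℝ) :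
    ∫ x, (f x - c * g x - K * (h x - c * k x)) ∂μ =
      ∫ x, f x ∂μ - c * ∫ x, g x ∂μ - K * (∫ x, h x ∂μ - c * ∫ x, k x ∂μ) := by
  have h1 : Integrable (fun x => f x - c * g x) μ := hf.sub (hg.const_mul c)
  have h2 : Integrable (fun x => h x - c * k x) μ := hh.sub (hk.const_mul c)
  rw [integral_sub h1 (h2.const_mul K), integral_sub hf (hg.const_mul c), integral_const_mul,
    integral_const_mul, integral_sub hh (hk.const_mul c), integral_const_mul]

theorem J_one_pos (n : ℕ) [NeZero n] (g : ℝ → ℝ)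
    (hgm : AEStronglyMeasurable g (volume.restrict (Ioi 0))) (hg : ∀ ρ > 0, |g ρ| ≤ 1)
    (hg0 : ∀ ρ > 0, 0 < g ρ) (j : ℕ) (a b : ℝ) (ha : 0 < a) (hb : 0 < b) :
    0 < Jint n g 1 j (a, b) := by
  rw [Jint, setIntegral_pos_iff_support_of_nonneg_ae]
  · have : Function.support (fun ρ => sphA n 1 (a * ρ) * ρ ^ j * (Real.exp (-b * ρ ^ 2) * g ρ)) ∩ Ioi 0
        = Ioi 0 := by
      apply inter_eq_right.2
      intro ρ hρ
      have h1 := sphA_one_pos n (a * ρ) (mul_pos ha hρ)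
      have h2 := hg0 ρ hρ
      have h3 : (0:ℝ) < ρ := hρ
      exact (by positivity : 0 < sphA n 1 (a * ρ) * ρ ^ j * (Real.exp (-b * ρ ^ 2) * g ρ)).ne'
    rw [this]; simp
  · filter_upwards [ae_restrict_mem measurableSet_Ioi] with ρ hρ
    have h1 := sphA_one_pos n (a * ρ) (mul_pos ha hρ)
    have h2 := hg0 ρ hρ
    have h3 : (0:ℝ) < ρ := hρ
    simp only [Pi.zero_apply]
    positivity
  · exact Jintegrable n g hgm hg 1 j (a, b) hb

theorem T_exists (n : ℕ) [NeZero n] (a c : ℝ) (ha : 0 < a) (hc : 0 < c) :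
    ∃ ρ > 0, ρ * (sphA n 1 (a * ρ) / sphA n 0 (a * ρ)) = c := by
  set m := sphA n 1 a / sphA n 0 a with hm
  have hmpos : 0 < m := div_pos (sphA_one_pos n a ha) (sphA_pos n a)
  set R := max 1 (c / m) with hR
  have hR1 : 1 ≤ R := le_max_left _ _
  have c1 := sphA_continuous n 1
  have c0 := sphA_continuous n 0
  have hcont : Continuous (fun ρ => ρ * (sphA n 1 (a * ρ) / sphA n 0 (a * ρ))) :=
    continuous_id.mul (Continuous.div (by fun_prop) (by fun_prop) (fun x => (sphA_pos n _).ne'))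
  have hle : c ≤ R * (sphA n 1 (a * R) / sphA n 0 (a * R)) := by
    have h1 : m ≤ sphA n 1 (a * R) / sphA n 0 (a * R) :=
      (sphA_ratio_mono n).monotone (by nlinarith : a ≤ a * R)
    have h2 : c / m ≤ R := le_max_right _ _
    rw [div_le_iff₀ hmpos] at h2
    nlinarith
  obtain ⟨ρ, hρ, h⟩ := intermediate_value_Icc (show (0:ℝ) ≤ R by linarith) hcont.continuousOn
    (show c ∈ Icc _ _ from ⟨by simpa using hc.le, hle⟩)
  refine ⟨ρ, lt_of_le_of_ne hρ.1 ?_, h⟩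
  rintro rfl
  simp at h; linarith


theorem ibp1 (Ψ : ℝ → ℝ) (hconv : ConvexOn ℝ (Set.Ici 0) Ψ) (hmono : MonotoneOn Ψ (Set.Ici 0)) (h0 : Ψ 0 = 0) (hnonneg : ∀ r ∈ Set.Ici (0 : ℝ), 0 ≤ Ψ r)
    (n : ℕ) [NeZero n] (a b : ℝ) (ha : 0 < a) (hb : 0 < b) :
    Jint n (fun ρ => Real.exp (-Ψ ρ)) 0 (n - 1) (a, b) + a * Jint n (fun ρ => Real.exp (-Ψ ρ)) 1 (n - 1 + 1) (a, b)
      - 2 * b * Jint n (fun ρ => Real.exp (-Ψ ρ)) 2 (n - 1 + 2) (a, b) =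
    ∫ ρ in Ioi 0, (sphA n 2 (a * ρ) * ρ ^ (n - 1 + 1) * Real.exp (-b * ρ ^ 2)) *
      (rD Ψ ρ * Real.exp (-Ψ ρ)) := by
  have hgm := g_meas Ψ hmono
  have hg := g_le Ψ hnonneg
  have i0 := Jintegrable n _ hgm hg 0 (n - 1) (a, b) hb
  have i1' := Jintegrable n _ hgm hg 1 (n - 1 + 1) (a, b) hb
  have i1 := i1'.const_mul a
  have i2' := Jintegrable n _ hgm hg 2 (n - 1 + 2) (a, b) hb
  have i2 := i2'.const_mul (2 * b)
  set W' : ℝ → ℝ := fun ρ => Real.exp (-b * ρ ^ 2) * (ρ ^ (n-1) * sphA n 0 (a * ρ) +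
    a * ρ ^ (n - 1 + 1) * sphA n 1 (a * ρ) - 2 * b * ρ ^ (n - 1 + 2) * sphA n 2 (a * ρ)) with hW'
  have hi := (i0.add i1).sub i2
  have e : EqOn (fun ρ => W' ρ * Real.exp (-Ψ ρ)) _ (Ioi 0) := fun ρ hρ => by
    show W' ρ * Real.exp (-Ψ ρ) = sphA n 0 (a * ρ) * ρ ^ (n - 1) * (Real.exp (-b * ρ ^ 2) * Real.exp (-Ψ ρ)) +
      a * (sphA n 1 (a * ρ) * ρ ^ (n - 1 + 1) * (Real.exp (-b * ρ ^ 2) * Real.exp (-Ψ ρ))) -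
      2 * b * (sphA n 2 (a * ρ) * ρ ^ (n - 1 + 2) * (Real.exp (-b * ρ ^ 2) * Real.exp (-Ψ ρ)))
    simp only [hW']; ring
  rw [← ibp Ψ hconv hmono h0 hnonneg n 2 (n - 1 + 1) a b hb (by simp) W' ?_ ?_]
  · rw [setIntegral_congr_fun measurableSet_Ioi e]
    exact (int_lin3 _ _ _ _ i0 i1' i2' a (2 * b)).symm
  · intro ρ hρ
    have d1 : HasDerivAt (fun ρ => sphA n 2 (a * ρ)) (sphA n 3 (a * ρ) * a) ρ := by
      have := (sphA_hasDerivAt n 2 (a * ρ)).comp ρ ((hasDerivAt_id ρ).const_mul a)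
      simpa [Function.comp_def] using this
    have d2 : HasDerivAt (fun ρ : ℝ => Real.exp (-b * ρ ^ 2)) _ ρ :=
      ((hasDerivAt_pow 2 ρ).const_mul (-b)).exp
    convert! (d1.mul (hasDerivAt_pow (n - 1 + 1) ρ)).mul d2 using 1
    have hb := sphA_bessel' n (a * ρ) (mul_pos ha hρ)
    have hn : ((n - 1 + 1 : ℕ) : ℝ) = n := by
      rw [Nat.sub_add_cancel NeZero.one_le]
    simp only [hW', hn, Nat.add_sub_cancel, Pi.mul_apply]
    push_cast
    linear_combination -Real.exp (-b * ρ ^ 2) * ρ ^ (n - 1) * hb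
  · exact IntegrableOn.congr_fun hi (fun x hx => (e hx).symm) measurableSet_Ioi

theorem ibp2 (Ψ : ℝ → ℝ) (hconv : ConvexOn ℝ (Set.Ici 0) Ψ) (hmono : MonotoneOn Ψ (Set.Ici 0)) (h0 : Ψ 0 = 0) (hnonneg : ∀ r ∈ Set.Ici (0 : ℝ), 0 ≤ Ψ r)
    (n : ℕ) [NeZero n] (a b : ℝ) (ha : 0 < a) (hb : 0 < b) :
    a * Jint n (fun ρ => Real.exp (-Ψ ρ)) 0 (n - 1) (a, b)
      - 2 * b * Jint n (fun ρ => Real.exp (-Ψ ρ)) 1 (n - 1 + 1) (a, b) =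
    ∫ ρ in Ioi 0, (sphA n 1 (a * ρ) * ρ ^ (n - 1) * Real.exp (-b * ρ ^ 2)) *
      (rD Ψ ρ * Real.exp (-Ψ ρ)) := by
  have hgm := g_meas Ψ hmono
  have hg := g_le Ψ hnonneg
  have i0' := Jintegrable n _ hgm hg 0 (n - 1) (a, b) hb
  have i0 := i0'.const_mul a
  have i1' := Jintegrable n _ hgm hg 1 (n - 1 + 1) (a, b) hb
  have i1 := i1'.const_mul (2 * b)
  set W' : ℝ → ℝ := fun ρ => Real.exp (-b * ρ ^ 2) * (a * ρ ^ (n-1) * sphA n 0 (a * ρ)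
    - 2 * b * ρ ^ (n - 1 + 1) * sphA n 1 (a * ρ)) with hW'
  have hi := i0.sub i1
  have e : EqOn (fun ρ => W' ρ * Real.exp (-Ψ ρ)) _ (Ioi 0) := fun ρ hρ => by
    show W' ρ * Real.exp (-Ψ ρ) = a * (sphA n 0 (a * ρ) * ρ ^ (n - 1) * (Real.exp (-b * ρ ^ 2) * Real.exp (-Ψ ρ))) -
      2 * b * (sphA n 1 (a * ρ) * ρ ^ (n - 1 + 1) * (Real.exp (-b * ρ ^ 2) * Real.exp (-Ψ ρ)))
    simp only [hW']; ring
  rw [← ibp Ψ hconv hmono h0 hnonneg n 1 (n - 1) a b hb (by simp [sphA_one_zero]) W' ?_ ?_]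
  · rw [setIntegral_congr_fun measurableSet_Ioi e]
    exact (int_lin2 _ _ _ i0' i1' a (2 * b)).symm
  · intro ρ hρ
    have d1 : HasDerivAt (fun ρ => sphA n 1 (a * ρ)) (sphA n 2 (a * ρ) * a) ρ := by
      have := (sphA_hasDerivAt n 1 (a * ρ)).comp ρ ((hasDerivAt_id ρ).const_mul a)
      simpa [Function.comp_def] using this
    have d2 : HasDerivAt (fun ρ : ℝ => Real.exp (-b * ρ ^ 2)) _ ρ :=
      ((hasDerivAt_pow 2 ρ).const_mul (-b)).exp
    convert! (d1.mul (hasDerivAt_pow (n - 1) ρ)).mul d2 using 1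
    have hb := sphA_bessel n (a * ρ) (mul_pos ha hρ)
    have hn : ((n - 1 : ℕ) : ℝ) = n - 1 := by
      rw [Nat.cast_sub NeZero.one_le]; simp
    have key : ρ * (((n - 1 : ℕ) : ℝ) * ρ ^ (n - 1 - 1)) = ((n:ℝ) - 1) * ρ ^ (n - 1) := by
      rw [← hn]
      cases h : n - 1 with
      | zero => simp
      | succ k => simp [pow_succ]; ring
    have hρ' : ρ ≠ 0 := ne_of_gt hρ
    apply mul_left_cancel₀ hρ'
    simp only [hW', Pi.mul_apply]
    push_cast
    linear_combination -Real.exp (-b * ρ ^ 2) * ρ ^ (n - 1) * hb - sphA n 1 (a * ρ) * Real.exp (-b * ρ ^ 2) * key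
  · exact IntegrableOn.congr_fun hi (fun x hx => (e hx).symm) measurableSet_Ioi

theorem strict_ineq (Ψ : ℝ → ℝ) (hconv : ConvexOn ℝ (Set.Ici 0) Ψ) (hmono : MonotoneOn Ψ (Set.Ici 0)) (h0 : Ψ 0 = 0) (hnonneg : ∀ r ∈ Set.Ici (0 : ℝ), 0 ≤ Ψ r) (hsuper : Tendsto (fun x => Ψ x / x) atTop atTop)
    (n : ℕ) [NeZero n] (a b : ℝ) (ha : 0 < a) (hb : 0 < b) :
    2 * b * (Jint n (fun ρ => Real.exp (-Ψ ρ)) 2 (n - 1 + 2) (a, b)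
        * Jint n (fun ρ => Real.exp (-Ψ ρ)) 0 (n - 1) (a, b)
      - Jint n (fun ρ => Real.exp (-Ψ ρ)) 1 (n - 1 + 1) (a, b) ^ 2) <
      Jint n (fun ρ => Real.exp (-Ψ ρ)) 0 (n - 1) (a, b) ^ 2 := by
  have hgm := g_meas Ψ hmono
  have hg := g_le Ψ hnonneg
  have hg0 : ∀ ρ > 0, 0 < Real.exp (-Ψ ρ) := fun ρ _ => Real.exp_pos _
  have e1 := ibp1 Ψ hconv hmono h0 hnonneg n a b ha hb
  have e2 := ibp2 Ψ hconv hmono h0 hnonneg n a b ha hb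
  have p0 := J_zero_pos n _ hgm hg hg0 (n - 1) (a, b) hb
  have p1 := J_one_pos n _ hgm hg hg0 (n - 1 + 1) a b ha hb
  have iI0 := Jintegrable n _ hgm hg 0 (n - 1) (a, b) hb
  have iI1 := Jintegrable n _ hgm hg 1 (n - 1 + 1) (a, b) hb
  have iN1 := Wrd_integrable Ψ hconv hmono h0 hnonneg n 2 (n - 1 + 1) a b hb
  have iN := Wrd_integrable Ψ hconv hmono h0 hnonneg n 1 (n - 1) a b hb
  set I0 := Jint n (fun ρ => Real.exp (-Ψ ρ)) 0 (n - 1) (a, b) with hI0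
  set I1 := Jint n (fun ρ => Real.exp (-Ψ ρ)) 1 (n - 1 + 1) (a, b) with hI1
  set I2 := Jint n (fun ρ => Real.exp (-Ψ ρ)) 2 (n - 1 + 2) (a, b) with hI2
  set c := I1 / I0 with hc
  have hcpos : 0 < c := div_pos p1 p0
  obtain ⟨ρ0, hρ0, hT⟩ := T_exists n a c ha hcpos
  obtain ⟨ρ1, hρ1, hr1⟩ := rD_exists_pos Ψ hconv hmono h0 hsuper
  set K := rD Ψ ρ0 * (sphA n 1 (a * ρ0) / sphA n 0 (a * ρ0)) with hK
  set D : ℝ → ℝ := fun ρ => ((sphA n 2 (a * ρ) * ρ ^ (n - 1 + 1) * Real.exp (-b * ρ ^ 2)) *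
      (rD Ψ ρ * Real.exp (-Ψ ρ)) - c * ((sphA n 1 (a * ρ) * ρ ^ (n - 1) * Real.exp (-b * ρ ^ 2)) *
      (rD Ψ ρ * Real.exp (-Ψ ρ)))) -
      K * ((sphA n 1 (a * ρ) * ρ ^ (n - 1 + 1) * (Real.exp (-b * ρ ^ 2) * Real.exp (-Ψ ρ))) -
       c * (sphA n 0 (a * ρ) * ρ ^ (n - 1) * (Real.exp (-b * ρ ^ 2) * Real.exp (-Ψ ρ)))) with hD
  have iD : IntegrableOn D (Ioi 0) :=
    (iN1.sub (iN.const_mul c)).sub ((iI1.sub (iI0.const_mul c)).const_mul K)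
  have hlow : ∀ ρ > 0, rD Ψ ρ * (Real.exp (-b * ρ ^ 2) * Real.exp (-Ψ ρ)) * ρ ^ (n - 1 + 1) *
      (sphA n 2 (a * ρ) - sphA n 1 (a * ρ) ^ 2 / sphA n 0 (a * ρ)) ≤ D ρ := by
    intro ρ hρ
    have a0 := sphA_pos n (a * ρ)
    set m := sphA n 1 (a * ρ) / sphA n 0 (a * ρ) with hm
    have hA1 : sphA n 1 (a * ρ) = m * sphA n 0 (a * ρ) := by rw [hm]; field_simp
    have hmpos : 0 < m := div_pos (sphA_one_pos n _ (mul_pos ha hρ)) a0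
    have hm0pos : 0 < sphA n 1 (a * ρ0) / sphA n 0 (a * ρ0) :=
      div_pos (sphA_one_pos n _ (mul_pos ha hρ0)) (sphA_pos n _)
    have hprod : 0 ≤ (rD Ψ ρ * m - K) * (ρ * m - c) := by
      rw [← hT]
      rcases le_total ρ0 ρ with h | h
      · have hm' : sphA n 1 (a * ρ0) / sphA n 0 (a * ρ0) ≤ m :=
          (sphA_ratio_mono n).monotone (by gcongr)
        have hr := rD_mono Ψ hconv hρ0 hρ h
        have hrn := rD_nonneg Ψ hconv hmono ρ0 hρ0
        apply mul_nonneg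
        · rw [sub_nonneg]; exact mul_le_mul hr hm' hm0pos.le (hrn.trans hr)
        · rw [sub_nonneg]; exact mul_le_mul h hm' hm0pos.le hρ.le
      · have hm' : m ≤ sphA n 1 (a * ρ0) / sphA n 0 (a * ρ0) :=
          (sphA_ratio_mono n).monotone (by gcongr)
        have hr := rD_mono Ψ hconv hρ hρ0 h
        have hrn := rD_nonneg Ψ hconv hmono ρ hρ
        apply mul_nonneg_of_nonpos_of_nonpos
        · rw [sub_nonpos]; exact mul_le_mul hr hm' hmpos.le (hrn.trans hr)
        · rw [sub_nonpos]; exact mul_le_mul h hm' hmpos.le hρ0.le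
    have hw : 0 ≤ Real.exp (-b * ρ ^ 2) * Real.exp (-Ψ ρ) * ρ ^ (n - 1) * sphA n 0 (a * ρ) := by
      have : (0:ℝ) < ρ := hρ
      positivity
    have := mul_nonneg hw hprod
    have e : sphA n 1 (a * ρ) ^ 2 / sphA n 0 (a * ρ) = m ^ 2 * sphA n 0 (a * ρ) := by
      rw [hA1]; field_simp
    rw [e]
    simp only [hD]
    rw [hA1, ← sub_nonneg]
    refine this.trans_eq ?_
    ring
  have hcs : ∀ ρ, 0 < sphA n 2 (a * ρ) - sphA n 1 (a * ρ) ^ 2 / sphA n 0 (a * ρ) := by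
    intro ρ
    rw [sub_pos, div_lt_iff₀ (sphA_pos n _)]
    exact sphA_cs n _
  have hDpos : 0 < ∫ ρ in Ioi 0, D ρ := by
    rw [setIntegral_pos_iff_support_of_nonneg_ae]
    · have hsub : Ioi ρ1 ⊆ Function.support D ∩ Ioi 0 := by
        intro ρ hρ
        have hρ' : ρ1 < ρ := hρ
        have hρp : 0 < ρ := hρ1.trans hρ'
        have h1 := hcs ρ
        have h2 : 0 < rD Ψ ρ := hr1.trans_le (rD_mono Ψ hconv hρ1 hρp hρ'.le)
        exact ⟨(lt_of_lt_of_le (by positivity) (hlow ρ hρp)).ne', hρp⟩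
      refine lt_of_lt_of_le ?_ (measure_mono hsub)
      simp
    · filter_upwards [ae_restrict_mem measurableSet_Ioi] with ρ hρ
      have h1 := hcs ρ
      have h2 := rD_nonneg Ψ hconv hmono ρ hρ
      have h3 : (0:ℝ) < ρ := hρ
      exact le_trans (by simp only [Pi.zero_apply]; positivity) (hlow ρ hρ)
    · exact iD
  have hval : ∫ ρ in Ioi 0, D ρ = (I0 + a * I1 - 2 * b * I2) - c * (a * I0 - 2 * b * I1)
      - K * (I1 - c * I0) := by
    rw [e1, e2]
    simp only [hD]
    exact int_lin4 _ _ _ _ _ iN1 iN iI1 iI0 c K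
  rw [hval] at hDpos
  have hc0 : c * I0 = I1 := by rw [hc]; field_simp
  have : 0 < I0 * (I0 + a * I1 - 2 * b * I2 - c * (a * I0 - 2 * b * I1) - K * (I1 - c * I0)) :=
    mul_pos p0 hDpos
  rw [← sub_pos]
  refine this.trans_eq ?_
  linear_combination (-a * I0 + 2 * b * I1 + K * I0) * hc0



theorem volIoi_integrable (d : ℕ) (f : ℝ → ℝ) (hf : IntegrableOn (fun ρ => ρ ^ d * f ρ) (Ioi 0)) :
    Integrable (fun ρ : Ioi (0:ℝ) => f ρ) (Measure.volumeIoiPow d) := by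
  simp only [Measure.volumeIoiPow, ENNReal.ofReal]
  rw [integrable_withDensity_iff_integrable_smul (by fun_prop)]
  rw [integrableOn_iff_comap_subtypeVal measurableSet_Ioi] at hf
  refine hf.congr (Eventually.of_forall fun ρ => ?_)
  simp only [Function.comp, NNReal.smul_def, smul_eq_mul]
  rw [Real.coe_toNNReal _ (pow_nonneg (le_of_lt ρ.2) _)]

theorem volIoi_integral (d : ℕ) (f : ℝ → ℝ) :
    ∫ ρ : Ioi (0:ℝ), f ρ ∂(Measure.volumeIoiPow d) = ∫ ρ in Ioi 0, ρ ^ d * f ρ := by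
  simp only [Measure.volumeIoiPow, ENNReal.ofReal]
  rw [integral_withDensity_eq_integral_smul (by fun_prop),
    integral_subtype_comap measurableSet_Ioi fun a ↦ Real.toNNReal (a ^ d) • f a]
  refine setIntegral_congr_fun measurableSet_Ioi fun x hx ↦ ?_
  simp only [NNReal.smul_def, smul_eq_mul]
  rw [Real.coe_toNNReal _ (pow_nonneg (le_of_lt hx) _)]

theorem bessel_formula (n : ℕ) [NeZero n] (Ψ : ℝ → ℝ) (hmono : MonotoneOn Ψ (Set.Ici 0))
    (hnonneg : ∀ r ∈ Set.Ici (0 : ℝ), 0 ≤ Ψ r) (t s : ℝ) (ht : 0 < t) :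
    besselSemigroup n t (fun s => Real.exp (-Ψ s)) s =
      Real.exp (-s ^ 2 / (4 * t)) / (4 * Real.pi * t) ^ ((n : ℝ) / 2) *
        Jint n (fun ρ => Real.exp (-Ψ ρ)) 0 (n - 1) (s / (2 * t), 1 / (4 * t)) := by
  have hg := g_le Ψ hnonneg
  have hmeas : Measurable (fun ρ : Ioi (0:ℝ) => Real.exp (-Ψ ρ)) := by
    have hm : Monotone (fun x : ℝ => Ψ (max x 0)) := fun x y h =>
      hmono (mem_Ici.2 (le_max_right _ _)) (mem_Ici.2 (le_max_right _ _)) (max_le_max h le_rfl)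
    have h2 : (fun ρ : Ioi (0:ℝ) => Real.exp (-Ψ ρ)) =
        (fun x : ℝ => Real.exp (-Ψ (max x 0))) ∘ Subtype.val := by
      funext ρ
      simp only [Function.comp]
      rw [max_eq_left (le_of_lt ρ.2)]
    rw [h2]
    exact (hm.measurable.neg.exp).comp measurable_subtype_coe
  set a := s / (2 * t) with ha
  set b := 1 / (4 * t) with hb
  have hbp : 0 < b := by positivity
  set F : SphE n × Ioi (0:ℝ) → ℝ := fun z =>
    Real.exp (a * z.2.1 * z.1.1 0) * (Real.exp (-b * z.2.1 ^ 2) * Real.exp (-Ψ z.2.1)) with hF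
  rw [besselSemigroup, polar_integral]
  have e : ∀ z : SphE n × Ioi (0:ℝ),
      Real.exp (-‖EuclideanSpace.single (0 : Fin n) s - z.2.1 • z.1.1‖ ^ 2 / (4 * t)) /
        (4 * Real.pi * t) ^ ((n : ℝ) / 2) * Real.exp (-Ψ ‖z.2.1 • z.1.1‖) =
      Real.exp (-s ^ 2 / (4 * t)) / (4 * Real.pi * t) ^ ((n : ℝ) / 2) * F z := by
    intro z
    have hz1 : ‖z.1.1‖ = 1 := by simp
    have hz2 : (0:ℝ) < z.2.1 := z.2.2
    have hn : ‖z.2.1 • z.1.1‖ = z.2.1 := by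
      rw [norm_smul, hz1, mul_one, Real.norm_of_nonneg hz2.le]
    have hq : ‖EuclideanSpace.single (0 : Fin n) s - z.2.1 • z.1.1‖ ^ 2 =
        s ^ 2 - 2 * (s * z.2.1 * z.1.1 0) + z.2.1 ^ 2 := by
      rw [norm_sub_sq_real, hn, inner_smul_right, EuclideanSpace.inner_single_left]
      simp; ring
    have hexp : -‖EuclideanSpace.single (0 : Fin n) s - z.2.1 • z.1.1‖ ^ 2 / (4 * t) =
        -s ^ 2 / (4 * t) + (a * z.2.1 * z.1.1 0 + -b * z.2.1 ^ 2) := by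
      rw [hq, ha, hb]; field_simp; ring
    rw [hexp, hn, Real.exp_add, Real.exp_add]
    simp only [hF]; ring
  simp only [e]
  rw [integral_const_mul]
  congr 1
  have hFi : Integrable F ((sphM n).prod (Measure.volumeIoiPow (n - 1))) := by
    have i1 : Integrable (fun _ : SphE n => (1:ℝ)) (sphM n) := integrable_const 1
    have i2 := volIoi_integrable (n - 1) (fun ρ => Real.exp (|a| * ρ - b * ρ ^ 2))
      (integrableOn_pow_exp (n - 1) |a| b hbp)
    refine Integrable.mono' (i1.mul_prod i2) ?_ (Eventually.of_forall fun z => ?_)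
    · have m1 : Measurable (fun z : SphE n × Ioi (0:ℝ) => z.2.1) :=
        measurable_subtype_coe.comp measurable_snd
      have m2 : Measurable (fun z : SphE n × Ioi (0:ℝ) => z.1.1 0) := (sph_meas 0).comp measurable_fst
      have m3 : Measurable (fun z : SphE n × Ioi (0:ℝ) => Real.exp (-Ψ z.2.1)) := hmeas.comp measurable_snd
      exact (((m1.const_mul a).mul m2).exp.mul (((m1.pow_const 2).const_mul (-b)).exp.mul m3)).aestronglyMeasurable
    · have hz2 : (0:ℝ) < z.2.1 := z.2.2
      have h1 := hg z.2.1 hz2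
      simp only [hF]
      rw [Real.norm_eq_abs, abs_mul, abs_mul, Real.abs_exp, Real.abs_exp, one_mul, sub_eq_add_neg, Real.exp_add]
      refine mul_le_mul (Real.exp_le_exp.2 ?_) ?_ (by positivity) (by positivity)
      · have h3 := sph_coord_le z.1 0
        calc _ ≤ |a * z.2.1 * z.1.1 0| := le_abs_self _
          _ = |a| * z.2.1 * |z.1.1 0| := by rw [abs_mul, abs_mul, abs_of_pos hz2]
          _ ≤ |a| * z.2.1 := mul_le_of_le_one_right (by positivity) h3
      · rw [neg_mul]
        exact mul_le_of_le_one_right (by positivity) h1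
  rw [integral_prod_symm _ hFi]
  have e2 : ∀ ρ : Ioi (0:ℝ), ∫ ω, F (ω, ρ) ∂(sphM n) =
      (fun ρ : ℝ => sphA n 0 (a * ρ) * (Real.exp (-b * ρ ^ 2) * Real.exp (-Ψ ρ))) ρ := by
    intro ρ
    simp only [hF, sphA]
    rw [integral_mul_const]
    simp
  simp only [e2]
  rw [volIoi_integral (n - 1) (fun ρ : ℝ => sphA n 0 (a * ρ) * (Real.exp (-b * ρ ^ 2) * Real.exp (-Ψ ρ))), Jint]
  refine setIntegral_congr_fun measurableSet_Ioi fun x hx ↦ ?_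
  simp only; ring


theorem super_lower (Ψ : ℝ → ℝ) (hnonneg : ∀ r ∈ Set.Ici (0 : ℝ), 0 ≤ Ψ r)
    (hsuper : Tendsto (fun x => Ψ x / x) atTop atTop) (M : ℝ) :
    ∃ C, ∀ ρ > 0, M * ρ - C ≤ Ψ ρ := by
  obtain ⟨R, hR⟩ := eventually_atTop.1 (hsuper.eventually_ge_atTop M)
  refine ⟨|M| * max R 0, fun ρ hρ => ?_⟩
  have hmx : 0 ≤ |M| * max R 0 := by positivity
  rcases le_total R ρ with h | h
  · have := hR ρ h
    rw [le_div_iff₀ hρ] at this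
    linarith
  · have h1 := hnonneg ρ (le_of_lt hρ)
    have h2 : M * ρ ≤ |M| * max R 0 :=
      mul_le_mul (le_abs_self M) (h.trans (le_max_left _ _)) (le_of_lt hρ) (abs_nonneg _)
    linarith

theorem J_upper (n : ℕ) [NeZero n] (Ψ : ℝ → ℝ) (hmono : MonotoneOn Ψ (Set.Ici 0))
    (hnonneg : ∀ r ∈ Set.Ici (0 : ℝ), 0 ≤ Ψ r)
    (hsuper : Tendsto (fun x => Ψ x / x) atTop atTop) (b : ℝ) (hb : 0 < b) (M : ℝ) (j : ℕ) :
    ∃ C > 0, ∀ a ≥ 0, Jint n (fun ρ => Real.exp (-Ψ ρ)) 0 j (a, b) ≤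
      C * Real.exp ((a - M) ^ 2 / (4 * b)) := by
  obtain ⟨C, hC⟩ := super_lower Ψ hnonneg hsuper (M + 1)
  have hi : IntegrableOn (fun ρ : ℝ => ρ ^ j * Real.exp (-ρ)) (Ioi 0) := by
    have := Real.GammaIntegral_convergent (s := (j:ℝ) + 1) (by positivity)
    refine this.congr_fun (fun x hx => ?_) measurableSet_Ioi
    simp only [add_sub_cancel_right, Real.rpow_natCast]
    ring
  set K := (sphM n).real univ * Real.exp C * ∫ ρ in Ioi 0, ρ ^ j * Real.exp (-ρ) with hK
  have hK0 : 0 ≤ K := by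
    refine mul_nonneg (by positivity) (setIntegral_nonneg measurableSet_Ioi fun x hx => ?_)
    have : (0:ℝ) < x := hx
    positivity
  refine ⟨K + 1, by linarith, fun a ha => ?_⟩
  have hgm := g_meas Ψ hmono
  have hg := g_le Ψ hnonneg
  have h1 : Jint n (fun ρ => Real.exp (-Ψ ρ)) 0 j (a, b) ≤
      ∫ ρ in Ioi 0, ((sphM n).real univ * Real.exp C * Real.exp ((a - M) ^ 2 / (4 * b))) *
        (ρ ^ j * Real.exp (-ρ)) := by
    rw [Jint]
    refine setIntegral_mono_on (Jintegrable n _ hgm hg 0 j (a, b) hb) (hi.const_mul _)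
      measurableSet_Ioi fun ρ hρ => ?_
    have hρ : (0:ℝ) < ρ := hρ
    have hA := (le_abs_self _).trans (sphA_abs_le n 0 (a * ρ))
    rw [abs_of_nonneg (by positivity : 0 ≤ a * ρ)] at hA
    have hexp : Real.exp (a * ρ) * (Real.exp (-b * ρ ^ 2) * Real.exp (-Ψ ρ)) ≤
        Real.exp C * Real.exp ((a - M) ^ 2 / (4 * b)) * Real.exp (-ρ) := by
      rw [← Real.exp_add, ← Real.exp_add, ← Real.exp_add, ← Real.exp_add]
      apply Real.exp_le_exp.2
      have h2 := hC ρ hρ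
      have h3 : 0 ≤ (a - M - 2 * b * ρ) ^ 2 / (4 * b) := by positivity
      have e : (a - M - 2 * b * ρ) ^ 2 / (4 * b) =
        (a - M) ^ 2 / (4 * b) - (a - M) * ρ + b * ρ ^ 2 := by field_simp; ring
      linarith
    calc sphA n 0 (a * ρ) * ρ ^ j * (Real.exp (-b * ρ ^ 2) * Real.exp (-Ψ ρ))
        ≤ ((sphM n).real univ * Real.exp (a * ρ)) * ρ ^ j * (Real.exp (-b * ρ ^ 2) * Real.exp (-Ψ ρ)) := by
          refine mul_le_mul_of_nonneg_right (mul_le_mul_of_nonneg_right hA ?_) ?_ <;> positivity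
      _ = ((sphM n).real univ * ρ ^ j) * (Real.exp (a * ρ) * (Real.exp (-b * ρ ^ 2) * Real.exp (-Ψ ρ))) := by ring
      _ ≤ ((sphM n).real univ * ρ ^ j) * (Real.exp C * Real.exp ((a - M) ^ 2 / (4 * b)) * Real.exp (-ρ)) := by
          exact mul_le_mul_of_nonneg_left hexp (by positivity)
      _ = _ := by ring
  rw [integral_const_mul] at h1
  have h2 : 0 < Real.exp ((a - M) ^ 2 / (4 * b)) := Real.exp_pos _
  refine h1.trans ?_
  calc _ = K * Real.exp ((a - M) ^ 2 / (4 * b)) := by rw [hK]; ring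
    _ ≤ _ := by nlinarith


theorem J_deriv_s (n : ℕ) [NeZero n] (g : ℝ → ℝ) (hgm : AEStronglyMeasurable g (volume.restrict (Ioi 0))) (hg : ∀ ρ > 0, |g ρ| ≤ 1)
    (k j : ℕ) (t s : ℝ) (ht : 0 < t) :
    HasDerivAt (fun s => Jint n g k j (s / (2 * t), 1 / (4 * t)))
      (Jint n g (k + 1) (j + 1) (s / (2 * t), 1 / (4 * t)) / (2 * t)) s := by
  have h1 : HasDerivAt (fun s : ℝ => (s / (2 * t), 1 / (4 * t))) ((1 / (2 * t), 0) : ℝ × ℝ) s :=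
    ((hasDerivAt_id s).div_const (2 * t)).prodMk (hasDerivAt_const s _)
  have h2 := (J_hasFDerivAt n g hgm hg k j (s / (2 * t), 1 / (4 * t)) (by positivity)).comp_hasDerivAt s h1
  convert! h2 using 1
  simp; ring

theorem J_deriv_t (n : ℕ) [NeZero n] (g : ℝ → ℝ) (hgm : AEStronglyMeasurable g (volume.restrict (Ioi 0))) (hg : ∀ ρ > 0, |g ρ| ≤ 1)
    (k j : ℕ) (t s : ℝ) (ht : 0 < t) :
    HasDerivAt (fun t => Jint n g k j (s / (2 * t), 1 / (4 * t)))
      (Jint n g (k + 1) (j + 1) (s / (2 * t), 1 / (4 * t)) * (-s / (2 * t ^ 2))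
        + Jint n g k (j + 2) (s / (2 * t), 1 / (4 * t)) * (1 / (4 * t ^ 2))) t := by
  have h1 : HasDerivAt (fun t : ℝ => (s / (2 * t), 1 / (4 * t)))
      ((-s / (2 * t ^ 2), -1 / (4 * t ^ 2)) : ℝ × ℝ) t := by
    refine HasDerivAt.prodMk ?_ ?_
    · convert! (hasDerivAt_const t s).div ((hasDerivAt_id t).const_mul 2) (by simp; positivity) using 1
      simp; field_simp
    · convert! (hasDerivAt_const t (1:ℝ)).div ((hasDerivAt_id t).const_mul 4) (by simp; positivity) using 1
      simp; field_simp
  have h2 := (J_hasFDerivAt n g hgm hg k j (s / (2 * t), 1 / (4 * t)) (by positivity)).comp_hasDerivAt t h1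
  convert! h2 using 1
  simp; ring

theorem J_strict_ts (n : ℕ) [NeZero n] (g : ℝ → ℝ) (hgm : AEStronglyMeasurable g (volume.restrict (Ioi 0))) (hg : ∀ ρ > 0, |g ρ| ≤ 1)
    (k j : ℕ) (t s : ℝ) (ht : 0 < t) :
    ∃ D : ℝ × ℝ →L[ℝ] ℝ, HasStrictFDerivAt (fun p : ℝ × ℝ => Jint n g k j (p.2 / (2 * p.1), 1 / (4 * p.1))) D (t, s) := by
  have h1 : ContDiffAt ℝ 1 (fun p : ℝ × ℝ => (p.2 / (2 * p.1), 1 / (4 * p.1))) (t, s) := by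
    refine ContDiffAt.prodMk ?_ ?_
    · exact contDiffAt_snd.div (contDiffAt_const.mul contDiffAt_fst) (by simp; positivity)
    · exact contDiffAt_const.div (contDiffAt_const.mul contDiffAt_fst) (by simp; positivity)
  have h2 := h1.hasStrictFDerivAt one_ne_zero
  exact ⟨_, HasStrictFDerivAt.comp (t, s)
    (J_hasStrictFDerivAt n g hgm hg k j (s / (2 * t), 1 / (4 * t)) (by positivity)) h2⟩



/-- the integrals at time `t` and position `s` -/
noncomputable def Jts (n : ℕ) [NeZero n] (Ψ : ℝ → ℝ) (k j : ℕ) (t s : ℝ) : ℝ :=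
  Jint n (fun ρ => Real.exp (-Ψ ρ)) k j (s / (2 * t), 1 / (4 * t))

noncomputable def potE (n : ℕ) [NeZero n] (Ψ : ℝ → ℝ) (t s : ℝ) : ℝ :=
  (n / 2 : ℝ) * Real.log (4 * Real.pi * t) + s ^ 2 / (4 * t) - Real.log (Jts n Ψ 0 (n - 1) t s)

noncomputable def potG (n : ℕ) [NeZero n] (Ψ : ℝ → ℝ) (t s : ℝ) : ℝ :=
  s / (2 * t) - Jts n Ψ 1 (n - 1 + 1) t s / (2 * t) / Jts n Ψ 0 (n - 1) t s

noncomputable def potH (n : ℕ) [NeZero n] (Ψ : ℝ → ℝ) (t s : ℝ) : ℝ :=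
  1 / (2 * t) - (Jts n Ψ 2 (n - 1 + 2) t s * Jts n Ψ 0 (n - 1) t s - Jts n Ψ 1 (n - 1 + 1) t s ^ 2)
    / (4 * t ^ 2 * Jts n Ψ 0 (n - 1) t s ^ 2)

noncomputable def potT (n : ℕ) [NeZero n] (Ψ : ℝ → ℝ) (t s : ℝ) : ℝ :=
  n / (2 * t) - s ^ 2 / (4 * t ^ 2) - (Jts n Ψ 1 (n - 1 + 1) t s * (-s / (2 * t ^ 2))
        + Jts n Ψ 0 (n - 1 + 2) t s * (1 / (4 * t ^ 2))) / Jts n Ψ 0 (n - 1) t s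

theorem Jts_pos (n : ℕ) [NeZero n] (Ψ : ℝ → ℝ) (hmono : MonotoneOn Ψ (Set.Ici 0)) (hnonneg : ∀ r ∈ Set.Ici (0 : ℝ), 0 ≤ Ψ r)
    (j : ℕ) (t s : ℝ) (ht : 0 < t) : 0 < Jts n Ψ 0 j t s :=
  J_zero_pos n _ (g_meas Ψ hmono) (g_le Ψ hnonneg) (fun _ _ => Real.exp_pos _) j _ (by positivity)

theorem evolved_eq (n : ℕ) [NeZero n] (Ψ : ℝ → ℝ) (hmono : MonotoneOn Ψ (Set.Ici 0)) (hnonneg : ∀ r ∈ Set.Ici (0 : ℝ), 0 ≤ Ψ r)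
    (t s : ℝ) (ht : 0 < t) : evolvedPotential n Ψ t s = potE n Ψ t s := by
  rw [evolvedPotential, bessel_formula n Ψ hmono hnonneg t s ht, potE]
  have hJ := Jts_pos n Ψ hmono hnonneg (n - 1) t s ht
  rw [Jts] at hJ ⊢
  have hp : 0 < 4 * Real.pi * t := by positivity
  rw [Real.log_mul (by positivity) hJ.ne', Real.log_div (by positivity) (by positivity), Real.log_exp,
    Real.log_rpow hp]
  ring

theorem potE_deriv (n : ℕ) [NeZero n] (Ψ : ℝ → ℝ) (hmono : MonotoneOn Ψ (Set.Ici 0)) (hnonneg : ∀ r ∈ Set.Ici (0 : ℝ), 0 ≤ Ψ r)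
    (t s : ℝ) (ht : 0 < t) : HasDerivAt (potE n Ψ t) (potG n Ψ t s) s := by
  have hJ := Jts_pos n Ψ hmono hnonneg (n - 1) t s ht
  have d := J_deriv_s n _ (g_meas Ψ hmono) (g_le Ψ hnonneg) 0 (n - 1) t s ht
  have d2 : HasDerivAt (fun s : ℝ => s ^ 2 / (4 * t)) (s / (2 * t)) s := by
    convert! (hasDerivAt_pow 2 s).div_const (4 * t) using 1
    simp; field_simp; ring
  exact (d2.const_add ((n / 2 : ℝ) * Real.log (4 * Real.pi * t))).sub (d.log hJ.ne')

theorem potG_deriv (n : ℕ) [NeZero n] (Ψ : ℝ → ℝ) (hmono : MonotoneOn Ψ (Set.Ici 0)) (hnonneg : ∀ r ∈ Set.Ici (0 : ℝ), 0 ≤ Ψ r)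
    (t s : ℝ) (ht : 0 < t) : HasDerivAt (potG n Ψ t) (potH n Ψ t s) s := by
  have hJ := Jts_pos n Ψ hmono hnonneg (n - 1) t s ht
  have d0 := J_deriv_s n _ (g_meas Ψ hmono) (g_le Ψ hnonneg) 0 (n - 1) t s ht
  have d1 := J_deriv_s n _ (g_meas Ψ hmono) (g_le Ψ hnonneg) 1 (n - 1 + 1) t s ht
  have d2 : HasDerivAt (fun s : ℝ => s / (2 * t)) (1 / (2 * t)) s := (hasDerivAt_id s).div_const (2 * t)
  have := d2.sub ((d1.div_const (2 * t)).div d0 hJ.ne')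
  convert! this using 1
  rw [potH]
  change _ = 1 / (2 * t) - (Jts n Ψ 2 (n - 1 + 2) t s / (2 * t) / (2 * t) * Jts n Ψ 0 (n - 1) t s -
    Jts n Ψ 1 (n - 1 + 1) t s / (2 * t) * (Jts n Ψ 1 (n - 1 + 1) t s / (2 * t))) /
    Jts n Ψ 0 (n - 1) t s ^ 2
  have hJ' := hJ.ne'
  field_simp
  ring

theorem potE_deriv_t (n : ℕ) [NeZero n] (Ψ : ℝ → ℝ) (hmono : MonotoneOn Ψ (Set.Ici 0)) (hnonneg : ∀ r ∈ Set.Ici (0 : ℝ), 0 ≤ Ψ r)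
    (t s : ℝ) (ht : 0 < t) : HasDerivAt (fun t => potE n Ψ t s) (potT n Ψ t s) t := by
  have hJ := Jts_pos n Ψ hmono hnonneg (n - 1) t s ht
  have d := J_deriv_t n _ (g_meas Ψ hmono) (g_le Ψ hnonneg) 0 (n - 1) t s ht
  have hp : 4 * Real.pi * t ≠ 0 := by positivity
  have d1 : HasDerivAt (fun t : ℝ => (n / 2 : ℝ) * Real.log (4 * Real.pi * t)) (n / (2 * t)) t := by
    convert! ((((hasDerivAt_id t).const_mul (4 * Real.pi)).log hp).const_mul (n / 2 : ℝ)) using 1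
    simp only [id, mul_one]
    have := Real.pi_pos.ne'
    field_simp
  have d2 : HasDerivAt (fun t : ℝ => s ^ 2 / (4 * t)) (-(s ^ 2 / (4 * t ^ 2))) t := by
    convert! (hasDerivAt_const t (s ^ 2)).div ((hasDerivAt_id t).const_mul 4) (by simp; positivity) using 1
    simp; field_simp
  convert! (d1.add d2).sub (d.log hJ.ne') using 1

theorem potE_strict (n : ℕ) [NeZero n] (Ψ : ℝ → ℝ) (hmono : MonotoneOn Ψ (Set.Ici 0)) (hnonneg : ∀ r ∈ Set.Ici (0 : ℝ), 0 ≤ Ψ r)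
    (t s : ℝ) (ht : 0 < t) : ∃ D : ℝ × ℝ →L[ℝ] ℝ,
    HasStrictFDerivAt (fun p : ℝ × ℝ => potE n Ψ p.1 p.2) D (t, s) := by
  have hJ := Jts_pos n Ψ hmono hnonneg (n - 1) t s ht
  obtain ⟨D, hD⟩ := J_strict_ts n _ (g_meas Ψ hmono) (g_le Ψ hnonneg) 0 (n - 1) t s ht
  have hp : 4 * Real.pi * t ≠ 0 := by positivity
  have h1 : ContDiffAt ℝ 1 (fun p : ℝ × ℝ => (n / 2 : ℝ) * Real.log (4 * Real.pi * p.1) + p.2 ^ 2 / (4 * p.1))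
      (t, s) := by
    refine ContDiffAt.add ?_ ?_
    · exact contDiffAt_const.mul ((contDiffAt_const.mul contDiffAt_fst).log hp)
    · exact (contDiffAt_snd.pow 2).div (contDiffAt_const.mul contDiffAt_fst) (by simp; positivity)
  exact ⟨_, (h1.hasStrictFDerivAt one_ne_zero).sub (hD.log hJ.ne')⟩

theorem evolved_strict (n : ℕ) [NeZero n] (Ψ : ℝ → ℝ) (hmono : MonotoneOn Ψ (Set.Ici 0)) (hnonneg : ∀ r ∈ Set.Ici (0 : ℝ), 0 ≤ Ψ r)
    (t s : ℝ) (ht : 0 < t) : ∃ D : ℝ × ℝ →L[ℝ] ℝ, D (1, 0) = potT n Ψ t s ∧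
    HasStrictFDerivAt (fun p : ℝ × ℝ => evolvedPotential n Ψ p.1 p.2) D (t, s) := by
  obtain ⟨D, hD⟩ := potE_strict n Ψ hmono hnonneg t s ht
  refine ⟨D, ?_, ?_⟩
  · have h1 : HasDerivAt (fun τ : ℝ => (τ, s)) ((1, 0) : ℝ × ℝ) t :=
      (hasDerivAt_id t).prodMk (hasDerivAt_const t s)
    have h2 := HasFDerivAt.comp_hasDerivAt (f := fun τ : ℝ => (τ, s)) t hD.hasFDerivAt h1
    exact h2.unique (potE_deriv_t n Ψ hmono hnonneg t s ht)
  · refine hD.congr_of_eventuallyEq ?_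
    have : ∀ᶠ q : ℝ × ℝ in nhds (t, s), 0 < q.1 := continuousAt_fst.eventually_const_lt ht
    filter_upwards [this] with q hq
    exact (evolved_eq n Ψ hmono hnonneg q.1 q.2 hq).symm

theorem potG_cont_t (n : ℕ) [NeZero n] (Ψ : ℝ → ℝ) (hmono : MonotoneOn Ψ (Set.Ici 0)) (hnonneg : ∀ r ∈ Set.Ici (0 : ℝ), 0 ≤ Ψ r)
    (t s : ℝ) (ht : 0 < t) : ContinuousAt (fun τ => potG n Ψ τ s) t := by
  have hJ := Jts_pos n Ψ hmono hnonneg (n - 1) t s ht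
  have d0 := (J_deriv_t n _ (g_meas Ψ hmono) (g_le Ψ hnonneg) 0 (n - 1) t s ht).continuousAt
  have d1 := (J_deriv_t n _ (g_meas Ψ hmono) (g_le Ψ hnonneg) 1 (n - 1 + 1) t s ht).continuousAt
  have c2 : ContinuousAt (fun τ : ℝ => 2 * τ) t := by fun_prop
  have ht2 : 2 * t ≠ 0 := by positivity
  exact (continuousAt_const.div c2 ht2).sub ((d1.div c2 ht2).div d0 hJ.ne')

theorem potH_pos (n : ℕ) [NeZero n] (Ψ : ℝ → ℝ) (hconv : ConvexOn ℝ (Set.Ici 0) Ψ) (hmono : MonotoneOn Ψ (Set.Ici 0)) (h0 : Ψ 0 = 0) (hnonneg : ∀ r ∈ Set.Ici (0 : ℝ), 0 ≤ Ψ r) (hsuper : Tendsto (fun x => Ψ x / x) atTop atTop)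
    (t s : ℝ) (ht : 0 < t) (hs : 0 < s) : 0 < potH n Ψ t s := by
  have hJ := Jts_pos n Ψ hmono hnonneg (n - 1) t s ht
  have h := strict_ineq Ψ hconv hmono h0 hnonneg hsuper n (s / (2 * t)) (1 / (4 * t))
    (by positivity) (by positivity)
  change 2 * (1 / (4 * t)) * (Jts n Ψ 2 (n - 1 + 2) t s * Jts n Ψ 0 (n - 1) t s
    - Jts n Ψ 1 (n - 1 + 1) t s ^ 2) < Jts n Ψ 0 (n - 1) t s ^ 2 at h
  rw [potH, sub_pos, div_lt_div_iff₀ (by positivity) (by positivity)]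
  rw [show 2 * (1 / (4 * t)) = 1 / (2 * t) by field_simp; norm_num, div_mul_eq_mul_div,
    div_lt_iff₀ (by positivity)] at h
  nlinarith

theorem heat_eq (n : ℕ) [NeZero n] (Ψ : ℝ → ℝ) (hmono : MonotoneOn Ψ (Set.Ici 0)) (hnonneg : ∀ r ∈ Set.Ici (0 : ℝ), 0 ≤ Ψ r)
    (t s : ℝ) (ht : 0 < t) (hs : 0 < s) :
    potT n Ψ t s = -potG n Ψ t s ^ 2 + potH n Ψ t s + ((n:ℝ) - 1) * potG n Ψ t s / s := by
  have hJ := Jts_pos n Ψ hmono hnonneg (n - 1) t s ht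
  have h := J_bessel n _ (g_meas Ψ hmono) (g_le Ψ hnonneg) (n - 1) (s / (2 * t)) (1 / (4 * t))
    (by positivity) (by positivity)
  change s / (2 * t) * Jts n Ψ 2 (n - 1 + 2) t s + ((n:ℝ) - 1) * Jts n Ψ 1 (n - 1 + 1) t s =
    s / (2 * t) * Jts n Ψ 0 (n - 1 + 2) t s at h
  rw [potT, potG, potH]
  have hJ' := hJ.ne'
  have hK : Jts n Ψ 0 (n - 1 + 2) t s = Jts n Ψ 2 (n - 1 + 2) t s
      + ((n:ℝ) - 1) * Jts n Ψ 1 (n - 1 + 1) t s * (2 * t) / s := by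
    field_simp at h ⊢
    linarith
  rw [hK]
  field_simp
  ring

theorem potG_surj (n : ℕ) [NeZero n] (Ψ : ℝ → ℝ) (hmono : MonotoneOn Ψ (Set.Ici 0)) (hnonneg : ∀ r ∈ Set.Ici (0 : ℝ), 0 ≤ Ψ r) (hsuper : Tendsto (fun x => Ψ x / x) atTop atTop)
    (t r : ℝ) (ht : 0 < t) (hr : 0 < r) : ∃ s > 0, potG n Ψ t s = r := by
  have hz : potG n Ψ t 0 = 0 := by
    simp [potG, Jts, Jint, sphA_one_zero]
  have hcont : Continuous (potG n Ψ t) :=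
    continuous_iff_continuousAt.2 fun s => (potG_deriv n Ψ hmono hnonneg t s ht).continuousAt
  have hex : ∃ s1 > 0, r ≤ potG n Ψ t s1 := by
    by_contra hcon
    push Not at hcon
    have hle : ∀ s ≥ 0, potE n Ψ t s - potE n Ψ t 0 ≤ r * (s - 0) := by
      intro s hs
      have hd : Differentiable ℝ (potE n Ψ t) := fun x =>
        (potE_deriv n Ψ hmono hnonneg t x ht).differentiableAt
      refine (convex_Ici (0:ℝ)).image_sub_le_mul_sub_of_deriv_le hd.continuous.continuousOn
        hd.differentiableOn ?_ 0 (by simp) s hs hs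
      intro x hx
      rw [interior_Ici] at hx
      rw [(potE_deriv n Ψ hmono hnonneg t x ht).deriv]
      exact (hcon x hx).le
    obtain ⟨C, hC, hup⟩ := J_upper n Ψ hmono hnonneg hsuper (1 / (4 * t)) (by positivity) (r + 1) (n - 1)
    have hlow : ∀ s ≥ 0, (n / 2 : ℝ) * Real.log (4 * Real.pi * t) + (r + 1) * s - Real.log C
        - (r + 1) ^ 2 * t ≤ potE n Ψ t s := by
      intro s hs
      have hJ := Jts_pos n Ψ hmono hnonneg (n - 1) t s ht
      have h1 := Real.log_le_log hJ (hup (s / (2 * t)) (by positivity))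
      rw [Real.log_mul hC.ne' (Real.exp_pos _).ne', Real.log_exp] at h1
      have e : (s / (2 * t) - (r + 1)) ^ 2 / (4 * (1 / (4 * t))) =
          s ^ 2 / (4 * t) - (r + 1) * s + (r + 1) ^ 2 * t := by
        field_simp; ring
      rw [e] at h1
      rw [potE]
      linarith
    set B := potE n Ψ t 0 - ((n / 2 : ℝ) * Real.log (4 * Real.pi * t) - Real.log C
        - (r + 1) ^ 2 * t) with hB
    have hm : 0 ≤ max B 0 + 1 := by positivity
    have k1 := hle _ hm
    have k2 := hlow _ hm
    have k3 := le_max_left B 0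
    linarith
  obtain ⟨s1, hs1, h1⟩ := hex
  obtain ⟨s, hs, h⟩ := intermediate_value_Icc hs1.le hcont.continuousOn
    (show r ∈ Icc _ _ from ⟨by rw [hz]; exact hr.le, h1⟩)
  refine ⟨s, lt_of_le_of_ne hs.1 ?_, h⟩
  rintro rfl
  rw [hz] at h; linarith

theorem legendre_evolution_equation (n : ℕ) [NeZero n] (Ψ : ℝ → ℝ)
    (hconv : ConvexOn ℝ (Set.Ici 0) Ψ) (hmono : MonotoneOn Ψ (Set.Ici 0))
    (h0 : Ψ 0 = 0) (hnonneg : ∀ r ∈ Set.Ici (0 : ℝ), 0 ≤ Ψ r)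
    (hsuper : Tendsto (fun x => Ψ x / x) atTop atTop) :
    ∀ t > (0 : ℝ), ∀ r > (0 : ℝ),
      deriv (fun τ => legendreEvolved n Ψ τ r) t =
        - 1 / deriv (deriv (fun s => legendreEvolved n Ψ t s)) r + r ^ 2 -
          (n - 1 : ℝ) * r / deriv (fun s => legendreEvolved n Ψ t s) r := by
  intro t ht r hr
  have key := legendre_abs (evolvedPotential n Ψ) (potG n Ψ) (potH n Ψ) (potT n Ψ)
    (fun t ht s hs => by
      have e : evolvedPotential n Ψ t = potE n Ψ t :=
        funext fun s => evolved_eq n Ψ hmono hnonneg t s ht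
      rw [e]; exact potE_deriv n Ψ hmono hnonneg t s ht)
    (fun t ht s _ => evolved_strict n Ψ hmono hnonneg t s ht)
    (fun t ht s _ => potG_deriv n Ψ hmono hnonneg t s ht)
    (fun t ht s _ => potG_cont_t n Ψ hmono hnonneg t s ht)
    (fun t ht s hs => potH_pos n Ψ hconv hmono h0 hnonneg hsuper t s ht hs)
    (fun t ht r hr => potG_surj n Ψ hmono hnonneg hsuper t r ht hr)
    (legendreEvolved n Ψ) (fun _ _ => rfl) t ht r hr
  obtain ⟨s, hs, hG, h1, h2, h3⟩ := key
  change deriv (fun τ => legendreEvolved n Ψ τ r) t =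
        - 1 / deriv (deriv (legendreEvolved n Ψ t)) r + r ^ 2 -
          (n - 1 : ℝ) * r / deriv (legendreEvolved n Ψ t) r
  rw [h1, h2, h3, heat_eq n Ψ hmono hnonneg t s ht hs, hG, div_inv_eq_mul]
  ring
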